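/- arXiv:1001.4652 — 5 statements merged into one kernel-verified Lean document; each statement's English description precedes it below -/
import Mathlib

section
/- There exists an extended Fatou coordinate for P_ω: a surjective map φ : Λ_ω → ℂ, holomorphic on Λ_ω, satisfying φ(P_ω(z)) = 1/q + φ(z) for all z ∈ Λ_ω (hence φ(P_ω^q(z)) = 1 + φ(z)), normalized so that φ(−ω/2) = 0, and whose critical points are exactly the backward orbit of the critical point: for z ∈ Λ_ω, φ′(z) = 0 if and only if there exists n ≥ 0 with P_ω^n(z) = −ω/2. -/
open Complex Filter Topology Set

/-- The quadratic polynomial `P_ω(z) = ω z + z²`. -/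
noncomputable def Pq (ω : ℂ) : ℂ → ℂ := fun z => ω * z + z ^ 2

/-- The augmented parabolic basin `Λ̃_ω`: points whose orbit converges to `0`. -/
def basinAug (ω : ℂ) : Set ℂ := {z | Tendsto (fun n => (Pq ω)^[n] z) atTop (𝓝 0)}

/-- The backward orbit of the parabolic fixed point `0`. -/
def preFixed (ω : ℂ) : Set ℂ := {z | ∃ n : ℕ, (Pq ω)^[n] z = 0}

/-- The parabolic basin `Λ_ω`. -/
def basin (ω : ℂ) : Set ℂ := basinAug ω \ preFixed ω

theorem halfplane_diff (F : ℂ → ℂ) (R : ℝ) (ε : ℕ → ℝ) (hs : Summable ε) (h0 : ∀ n, 0 ≤ ε n)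
    (hε : ∑' n, ε n ≤ 1/4)
    (hd : ∀ w : ℂ, R < w.re → DifferentiableAt ℂ F w)
    (h1 : ∀ w : ℂ, R < w.re → ‖F w - w - 1‖ ≤ 1/2)
    (h2 : ∀ (n : ℕ) (w : ℂ), R + n/2 < w.re → ‖deriv F w - 1‖ ≤ ε n) :
    (∀ (n : ℕ) (w : ℂ), R < w.re → w.re + n/2 ≤ (F^[n] w).re) ∧
    (∀ (n : ℕ) (w : ℂ), R < w.re → DifferentiableAt ℂ (F^[n]) w) ∧
    (∀ (n : ℕ) (w w' : ℂ), R < w.re → R < w'.re →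
      ‖(F^[n] w - F^[n] w') - (w - w')‖ ≤ 1/2 * ‖w - w'‖) ∧
    (∀ (n : ℕ) (w w' : ℂ), R < w.re → R < w'.re →
      ‖(F^[n+1] w - F^[n+1] w') - (F^[n] w - F^[n] w')‖ ≤ ε n * (2 * ‖w - w'‖)) := by
  have hstep : ∀ w : ℂ, R < w.re → w.re + 1/2 ≤ (F w).re := by
    intro w hw
    have := (abs_re_le_norm _).trans (h1 w hw)
    simp only [sub_re, one_re] at this
    have := (abs_le.1 this).1
    linarith
  have hre : ∀ (n : ℕ) (w : ℂ), R < w.re → w.re + n/2 ≤ (F^[n] w).re := by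
    intro n
    induction n with
    | zero => intro w hw; simp
    | succ n ih =>
      intro w hw
      rw [Function.iterate_succ_apply']
      have a := ih w hw
      have : R < (F^[n] w).re := by
        have : (0:ℝ) ≤ n/2 := by positivity
        linarith
      have := hstep _ this
      push_cast
      linarith
  have hreR : ∀ (n : ℕ) (w : ℂ), R < w.re → R < (F^[n] w).re := by
    intro n w hw
    have := hre n w hw
    have : (0:ℝ) ≤ n/2 := by positivity
    linarith
  have hdn : ∀ (n : ℕ) (w : ℂ), R < w.re → DifferentiableAt ℂ (F^[n]) w := by
    intro n
    induction n with
    | zero => intro w hw; exact differentiableAt_id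
    | succ n ih =>
      intro w hw
      rw [Function.iterate_succ']
      exact (hd _ (hreR n w hw)).comp w (ih w hw)
  have hmv : ∀ (n : ℕ) (w w' : ℂ), R < w.re → R < w'.re →
      ‖(F^[n+1] w - F^[n+1] w') - (F^[n] w - F^[n] w')‖ ≤ ε n * ‖F^[n] w - F^[n] w'‖ := by
    intro n w w' hw hw'
    have hn : (0:ℝ) ≤ n/2 := by positivity
    have hc : Convex ℝ {w : ℂ | R + n/2 < w.re} := convex_halfSpace_re_gt _
    have := hc.norm_image_sub_le_of_norm_deriv_le (𝕜 := ℂ) (f := fun w => F w - w) (C := ε n)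
      (x := F^[n] w') (y := F^[n] w) ?_ ?_ ?_ ?_
    · rw [Function.iterate_succ_apply', Function.iterate_succ_apply']
      refine le_trans (le_of_eq ?_) this
      congr 1; ring
    · intro x hx
      have hx : R + n/2 < x.re := hx
      exact (hd x (by linarith)).sub differentiableAt_id
    · intro x hx
      have hx' : R + n/2 < x.re := hx
      rw [deriv_fun_sub (hd x (by linarith)) differentiableAt_fun_id]
      simpa using h2 n x hx
    · have := hre n w' hw'
      show R + n/2 < _
      linarith
    · have := hre n w hw
      show R + n/2 < _
      linarith
  have hind : ∀ (n : ℕ) (w w' : ℂ), R < w.re → R < w'.re →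
      ‖(F^[n] w - F^[n] w') - (w - w')‖ ≤ 2 * (∑ k ∈ Finset.range n, ε k) * ‖w - w'‖ := by
    intro n w w' hw hw'
    induction n with
    | zero => simp
    | succ n ih =>
      have hsum : ∑ k ∈ Finset.range n, ε k ≤ 1/4 :=
        (hs.sum_le_tsum _ (fun i _ => h0 i)).trans hε
      have hm := hmv n w w' hw hw'
      have hb : ‖F^[n] w - F^[n] w'‖ ≤ 2 * ‖w - w'‖ := by
        have e : F^[n] w - F^[n] w' = ((F^[n] w - F^[n] w') - (w - w')) + (w - w') := by ring
        rw [e]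
        refine (norm_add_le _ _).trans ?_
        nlinarith [norm_nonneg (w - w')]
      have e : (F^[n+1] w - F^[n+1] w') - (w - w') =
        ((F^[n+1] w - F^[n+1] w') - (F^[n] w - F^[n] w')) + ((F^[n] w - F^[n] w') - (w - w')) := by
        ring
      rw [e, Finset.sum_range_succ]
      refine (norm_add_le _ _).trans ?_
      have := mul_le_mul_of_nonneg_left hb (h0 n)
      linarith
  have hhalf : ∀ (n : ℕ) (w w' : ℂ), R < w.re → R < w'.re →
      ‖(F^[n] w - F^[n] w') - (w - w')‖ ≤ 1/2 * ‖w - w'‖ := by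
    intro n w w' hw hw'
    have hsum : ∑ k ∈ Finset.range n, ε k ≤ 1/4 :=
      (hs.sum_le_tsum _ (fun i _ => h0 i)).trans hε
    refine (hind n w w' hw hw').trans ?_
    nlinarith [norm_nonneg (w - w')]
  refine ⟨hre, hdn, hhalf, ?_⟩
  intro n w w' hw hw'
  refine (hmv n w w' hw hw').trans ?_
  gcongr
  · exact h0 n
  have e : F^[n] w - F^[n] w' = ((F^[n] w - F^[n] w') - (w - w')) + (w - w') := by ring
  rw [e]
  refine (norm_add_le _ _).trans ?_
  have := hhalf n w w' hw hw'
  nlinarith [norm_nonneg (w - w')]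

theorem halfplane_fatou (F : ℂ → ℂ) (R : ℝ) (ε : ℕ → ℝ) (hs : Summable ε) (h0 : ∀ n, 0 ≤ ε n)
    (hε : ∑' n, ε n ≤ 1/4)
    (hd : ∀ w : ℂ, R < w.re → DifferentiableAt ℂ F w)
    (h1 : ∀ w : ℂ, R < w.re → ‖F w - w - 1‖ ≤ 1/2)
    (h2 : ∀ (n : ℕ) (w : ℂ), R + n/2 < w.re → ‖deriv F w - 1‖ ≤ ε n)
    (h3 : ∀ δ > 0, ∃ R', ∀ w : ℂ, R' < w.re → ‖F w - w - 1‖ ≤ δ) :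
    ∃ Φ : ℂ → ℂ, ∀ w : ℂ, R < w.re → DifferentiableAt ℂ Φ w ∧ Φ (F w) = Φ w + 1 ∧
      ‖deriv Φ w - 1‖ ≤ 1/2 ∧ (∀ n : ℕ, DifferentiableAt ℂ (F^[n]) w) ∧ Tendsto (fun n => deriv (F^[n]) w) atTop (𝓝 (deriv Φ w)) := by
  obtain ⟨hre, hdn, hhalf, hstep⟩ := halfplane_diff F R ε hs h0 hε hd h1 h2
  set w0 : ℂ := ((R + 1 : ℝ) : ℂ) with hw0
  have hw0R : R < w0.re := by simp [hw0]
  set D : ℕ → ℂ → ℂ := fun n w => F^[n] w - F^[n] w0 with hD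
  set Φ : ℂ → ℂ := fun w => limUnder atTop (fun n => D n w) with hΦ
  have hopen : ∀ ρ : ℝ, IsOpen ({w : ℂ | R < w.re} ∩ Metric.ball w0 ρ) := fun ρ =>
    (isOpen_lt continuous_const continuous_re).inter Metric.isOpen_ball
  have hlim : ∀ w : ℂ, R < w.re → Tendsto (fun n => D n w) atTop (𝓝 (Φ w)) := by
    intro w hw
    have : CauchySeq (fun n => D n w) := by
      refine cauchySeq_of_summable_dist (f := fun n => D n w) ?_
      refine Summable.of_nonneg_of_le (fun _ => dist_nonneg) (fun n => ?_) (hs.mul_right (2 * ‖w - w0‖))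
      rw [dist_comm, dist_eq_norm]
      exact hstep n w w0 hw hw0R
    exact tendsto_nhds_limUnder (cauchySeq_tendsto_of_complete this)
  have hunif : ∀ ρ : ℝ, TendstoUniformlyOn D Φ atTop ({w : ℂ | R < w.re} ∩ Metric.ball w0 ρ) := by
    intro ρ
    have htail : Tendsto (fun n => (∑' k, ε (k + n)) * (2 * |ρ|)) atTop (𝓝 0) := by
      simpa using (tendsto_sum_nat_add ε).mul_const (2 * |ρ|)
    rw [Metric.tendstoUniformlyOn_iff]
    intro δ hδ
    filter_upwards [htail.eventually (gt_mem_nhds hδ)] with n hn w hw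
    have hwR : R < w.re := hw.1
    have hwb : ‖w - w0‖ ≤ |ρ| := by
      have := hw.2
      rw [Metric.mem_ball, dist_eq_norm] at this
      exact this.le.trans (le_abs_self _)
    refine lt_of_le_of_lt ?_ hn
    have hd : ∀ k, dist (D k w) (D (k+1) w) ≤ ε k * (2 * |ρ|) := by
      intro k
      rw [dist_comm, dist_eq_norm]
      refine (hstep k w w0 hwR hw0R).trans ?_
      have := h0 k
      gcongr
    have := dist_le_tsum_of_dist_le_of_tendsto (f := fun n => D n w) (fun k => ε k * (2 * |ρ|)) hd
      (hs.mul_right _) (hlim w hwR) n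
    rw [dist_comm]
    refine this.trans (le_of_eq ?_)
    rw [← tsum_mul_right]
    congr 1; ext k; rw [add_comm]
  have hDdiff : ∀ ρ n, DifferentiableOn ℂ (D n) ({w : ℂ | R < w.re} ∩ Metric.ball w0 ρ) := by
    intro ρ n w hw
    exact ((hdn n w hw.1).sub_const _).differentiableWithinAt
  have hmem : ∀ w : ℂ, R < w.re → w ∈ ({w : ℂ | R < w.re} ∩ Metric.ball w0 (dist w w0 + 1)) :=
    fun w hw => ⟨hw, by simp [Metric.mem_ball]⟩
  refine ⟨Φ, fun w hw => ?_⟩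
  have hdΦ : DifferentiableAt ℂ Φ w :=
    (((hunif (dist w w0 + 1)).tendstoLocallyUniformlyOn.differentiableOn
      (Eventually.of_forall (hDdiff _)) (hopen _)).differentiableAt ((hopen _).mem_nhds (hmem w hw)))
  have hderiv : Tendsto (fun n => deriv (F^[n]) w) atTop (𝓝 (deriv Φ w)) := by
    have := ((hunif (dist w w0 + 1)).tendstoLocallyUniformlyOn.deriv
      (Eventually.of_forall (hDdiff _)) (hopen _)).tendsto_at (hmem w hw)
    refine this.congr fun n => ?_
    simp [hD, Function.comp]
  refine ⟨hdΦ, ?_, ?_, fun n => hdn n w hw, hderiv⟩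
  · have hFw : R < (F w).re := by
      have := hre 1 w hw
      simp at this
      linarith
    have t1 := (hlim (F w) hFw).sub (hlim w hw)
    have t2 : Tendsto (fun n => D n (F w) - D n w) atTop (𝓝 1) := by
      rw [tendsto_iff_norm_sub_tendsto_zero]
      rw [Metric.tendsto_atTop]
      intro δ hδ
      obtain ⟨R', hR'⟩ := h3 (δ/2) (by positivity)
      obtain ⟨N, hN⟩ := exists_nat_gt (2 * (R' - w.re))
      refine ⟨N, fun n hn => ?_⟩
      have hnN : (N:ℝ) ≤ n := by exact_mod_cast hn
      have h5 := hR' (F^[n] w) (by have := hre n w hw; linarith)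
      rw [dist_zero_right, norm_norm]
      have : D n (F w) - D n w - 1 = F (F^[n] w) - F^[n] w - 1 := by
        simp only [hD]
        rw [← Function.iterate_succ_apply, Function.iterate_succ_apply']
        ring
      rw [this]
      linarith
    have := tendsto_nhds_unique t1 t2
    rw [← this]; ring
  · have hev : ∀ᶠ w' in 𝓝 w, ‖(Φ w' - w') - (Φ w - w)‖ ≤ 1/2 * ‖w' - w‖ := by
      filter_upwards [(isOpen_lt continuous_const continuous_re).mem_nhds hw] with w' hw'
      have := (((hlim w' hw').sub (hlim w hw)).sub_const (w' - w)).norm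
      have := le_of_tendsto this (Eventually.of_forall fun n => by
        have := hhalf n w' w hw' hw
        simpa [hD] using this)
      have e : (Φ w' - w') - (Φ w - w) = Φ w' - Φ w - (w' - w) := by ring
      rw [e]; linarith
    have hda : HasDerivAt (fun w => Φ w - w) (deriv Φ w - 1) w := hdΦ.hasDerivAt.sub (hasDerivAt_id w)
    have := hda.hasFDerivAt.le_of_lip' (by norm_num : (0:ℝ) ≤ 1/2) hev
    simpa using this

theorem halfplane_surj (h F : ℂ → ℂ) (R : ℝ)
    (hd : ∀ w : ℂ, R < w.re → DifferentiableAt ℂ h w)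
    (h1 : ∀ w : ℂ, R < w.re → ‖deriv h w - 1‖ ≤ 1/2)
    (hF : ∀ w : ℂ, R < w.re → w.re + 1/2 ≤ (F w).re)
    (hh : ∀ w : ℂ, R < w.re → h (F w) = h w + 1) (t : ℂ) :
    ∃ n : ℕ, ∃ w : ℂ, R < w.re ∧ h w = t + n := by
  set w0 : ℂ := ((R + 1 : ℝ) : ℂ) with hw0
  have hit : ∀ n : ℕ, R + 1 + n/2 ≤ (F^[n] w0).re ∧ h (F^[n] w0) = h w0 + n := by
    intro n
    induction n with
    | zero => simp [hw0]
    | succ n ih =>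
      rw [Function.iterate_succ_apply']
      have hR : R < (F^[n] w0).re := by
        have : (0:ℝ) ≤ n/2 := by positivity
        linarith [ih.1]
      have a := hF _ hR
      rw [hh _ hR, ih.2]
      push_cast
      constructor
      · linarith [ih.1]
      · ring
  have hlow : ∀ w w' : ℂ, R < w.re → R < w'.re → ‖w - w'‖ / 2 ≤ ‖h w - h w'‖ := by
    intro w w' hw hw'
    have hc : Convex ℝ {w : ℂ | R < w.re} := convex_halfSpace_re_gt _
    have := hc.norm_image_sub_le_of_norm_deriv_le (𝕜 := ℂ) (f := fun w => h w - w) (C := 1/2)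
      (x := w') (y := w) ?_ ?_ hw' hw
    · have e : w - w' = (h w - h w') - ((h w - w) - (h w' - w')) := by ring
      have := (congrArg norm e).le.trans (norm_sub_le _ _)
      linarith
    · intro x hx
      exact (hd x hx).sub differentiableAt_id
    · intro x hx
      rw [deriv_fun_sub (hd x hx) differentiableAt_fun_id]
      simpa using h1 x hx
  obtain ⟨n, hn⟩ := exists_nat_gt (8 * ‖t - h w0‖)
  have hnpos : (0:ℝ) < n := lt_of_le_of_lt (by positivity) hn
  obtain ⟨hre, hval⟩ := hit n
  have hball : ∀ z ∈ Metric.closedBall (F^[n] w0) (n/2 : ℝ), R < z.re := by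
    intro z hz
    rw [Metric.mem_closedBall, dist_eq_norm] at hz
    have := (abs_le.1 ((abs_re_le_norm _).trans hz)).1
    simp only [sub_re] at this
    linarith
  have hdc : DiffContOnCl ℂ h (Metric.ball (F^[n] w0) (n/2 : ℝ)) := by
    refine DifferentiableOn.diffContOnCl ?_
    intro z hz
    exact (hd z (hball z (Metric.closure_ball_subset_closedBall hz))).differentiableWithinAt
  have hself : R < (F^[n] w0).re := hball _ (by simp; positivity)
  have key := hdc.ball_subset_image_closedBall (ε := n/4) (by positivity) (fun z hz => by
      have := hlow z (F^[n] w0) (hball z (Metric.sphere_subset_closedBall hz)) hself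
      rw [mem_sphere_iff_norm] at hz
      rw [hz] at this
      linarith) (by
      have hne : ∀ᶠ z in 𝓝[≠] (F^[n] w0), h z ≠ h (F^[n] w0) := by
        have hm : {w : ℂ | R < w.re} ∈ 𝓝[≠] (F^[n] w0) := nhdsWithin_le_nhds ((isOpen_lt continuous_const continuous_re).mem_nhds hself)
        filter_upwards [hm, self_mem_nhdsWithin] with z hz hz' heq
        have := hlow z (F^[n] w0) hz hself
        rw [heq, sub_self, norm_zero] at this
        have h0 : ‖z - F^[n] w0‖ = 0 := le_antisymm (by linarith) (norm_nonneg _)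
        exact hz' (sub_eq_zero.1 (norm_eq_zero.1 h0))
      exact hne.frequently.filter_mono nhdsWithin_le_nhds)
  have ht : t + n ∈ Metric.ball (h (F^[n] w0)) ((n:ℝ)/4/2) := by
    rw [Metric.mem_ball, dist_eq_norm, hval]
    have e : t + n - (h w0 + n) = t - h w0 := by ring
    rw [e]; linarith
  obtain ⟨z, hz, hz'⟩ := key ht
  exact ⟨n, z, hball z hz, hz'⟩

theorem exists_E (f g : ℂ → ℂ) (m : ℕ) (hm : m ≠ 0) (hg : Differentiable ℂ g) (ha : g 0 ≠ 0)
    (hf : ∀ z, f z = z * (1 + z ^ m * g z)) (K : ℂ) (hK : K = -1 / (m * g 0)) :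
    ∃ E : ℂ → ℂ, AnalyticAt ℂ E 0 ∧ E 0 = 0 ∧
      ∀ᶠ z in 𝓝 (0:ℂ), z ≠ 0 → K / (f z) ^ m = K / z ^ m + 1 + E z := by
  have hu : Continuous fun z : ℂ => 1 + z ^ m * g z := by
    have := hg.continuous
    fun_prop
  have hga : AnalyticAt ℂ g 0 := hg.analyticAt 0
  have hm' : (m : ℂ) ≠ 0 := by exact_mod_cast hm
  refine ⟨fun z => -K * g z * (∑ i ∈ Finset.range m, (1 + z ^ m * g z) ^ i) / (1 + z ^ m * g z) ^ m - 1,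
    ?_, ?_, ?_⟩
  · have hs : AnalyticAt ℂ (fun z => ∑ i ∈ Finset.range m, (1 + z ^ m * g z) ^ i) 0 := by
      refine Finset.analyticAt_fun_sum _ fun i _ => ?_
      fun_prop
    refine AnalyticAt.sub (AnalyticAt.div ?_ ?_ ?_) analyticAt_const
    · exact (analyticAt_const.mul hga).mul hs
    · fun_prop
    · simp [hm]
  · simp [hm, hK]
    field_simp
    ring
  · have : ∀ᶠ z in 𝓝 (0:ℂ), 1 + z ^ m * g z ≠ 0 := by
      refine hu.continuousAt.eventually_ne ?_
      simp [hm]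
    filter_upwards [this] with z hz hz0
    have hgeo := geom_sum_mul (1 + z ^ m * g z) m
    rw [hf z, mul_pow]
    generalize (∑ i ∈ Finset.range m, (1 + z ^ m * g z) ^ i) = Q at *
    have hx := pow_ne_zero m hz
    have hzm := pow_ne_zero m hz0
    have e : (1 + z ^ m * g z) ^ m = 1 + Q * (z ^ m * g z) := by
      linear_combination -hgeo
    generalize (1 + z ^ m * g z) ^ m = T at hx e ⊢
    field_simp
    linear_combination -K * e

theorem specific_fatou (E : ℂ → ℂ) (hE : AnalyticAt ℂ E 0) (hE0 : E 0 = 0) (s : ℝ) (hs : 0 < s)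
    (ρ : ℝ) (hρ : 0 ≤ ρ) (R0 : ℝ) :
    ∃ R, R0 ≤ R ∧ 0 < R ∧ ∀ c : ℂ, ‖c‖ ≤ ρ → ∃ Φ : ℂ → ℂ, ∀ w : ℂ, R < w.re →
      ‖E (c * w ^ ((-s : ℝ) : ℂ))‖ ≤ 1/2 ∧
      DifferentiableAt ℂ Φ w ∧ Φ (w + 1 + E (c * w ^ ((-s : ℝ) : ℂ))) = Φ w + 1 ∧
      ‖deriv Φ w - 1‖ ≤ 1/2 ∧
      (∀ n : ℕ, DifferentiableAt ℂ ((fun w => w + 1 + E (c * w ^ ((-s : ℝ) : ℂ)))^[n]) w) ∧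
      Tendsto (fun n => deriv ((fun w => w + 1 + E (c * w ^ ((-s : ℝ) : ℂ)))^[n]) w) atTop
        (𝓝 (deriv Φ w)) := by
  -- local bounds on E
  obtain ⟨δ, hδ, hloc⟩ : ∃ δ > 0, ∀ z : ℂ, ‖z‖ < δ →
      DifferentiableAt ℂ E z ∧ ‖deriv E z‖ ≤ ‖deriv E 0‖ + 1 ∧ ‖E z‖ ≤ 1/2 := by
    have e1 : ∀ᶠ z in 𝓝 (0:ℂ), DifferentiableAt ℂ E z :=
      hE.eventually_analyticAt.mono fun z hz => hz.differentiableAt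
    have e2 : ∀ᶠ z in 𝓝 (0:ℂ), ‖deriv E z‖ < ‖deriv E 0‖ + 1 :=
      hE.deriv.continuousAt.norm.eventually_lt_const (lt_add_one _)
    have e3 : ∀ᶠ z in 𝓝 (0:ℂ), ‖E z‖ < 1/2 :=
      hE.continuousAt.norm.eventually_lt_const (by simp [hE0])
    have := (e1.and (e2.and e3))
    rw [Metric.eventually_nhds_iff] at this
    obtain ⟨δ, hδ, h⟩ := this
    refine ⟨δ, hδ, fun z hz => ?_⟩
    have := h (y := z) (by simpa using hz)
    exact ⟨this.1, this.2.1.le, this.2.2.le⟩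
  set B := ‖deriv E 0‖ + 1 with hB
  have hB0 : 0 ≤ B := by positivity
  have hσ : ∀ η > 0, ∃ R1 > 0, ∀ c w : ℂ, ‖c‖ ≤ ρ → R1 < w.re → ‖c * w ^ ((-s : ℝ) : ℂ)‖ < η := by
    intro η hη
    have t := (tendsto_rpow_neg_atTop hs).const_mul ρ
    rw [mul_zero] at t
    obtain ⟨R1, hR1⟩ := (t.eventually (gt_mem_nhds hη)).exists_forall_of_atTop
    refine ⟨max R1 1, by positivity, fun c w hc hw => ?_⟩
    have h1 : R1 < w.re := lt_of_le_of_lt (le_max_left _ _) hw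
    have h2 : 1 < w.re := lt_of_le_of_lt (le_max_right _ _) hw
    refine lt_of_le_of_lt ?_ (hR1 w.re h1.le)
    rw [norm_mul, norm_cpow_real]
    refine mul_le_mul hc ?_ (by positivity) hρ
    exact Real.rpow_le_rpow_of_nonpos (by linarith) (re_le_norm w) (by linarith)
  obtain ⟨R1, hR1, hR1'⟩ := hσ δ hδ
  set ε0 : ℕ → ℝ := fun n => B * (ρ * s) * ((n : ℝ)/2) ^ (-(1 + s)) with hε0
  have hε0s : Summable ε0 := by
    have : Summable fun n : ℕ => (n:ℝ) ^ (-(1 + s)) := Real.summable_nat_rpow.2 (by linarith)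
    refine ((this.mul_right ((2:ℝ) ^ (1 + s))).mul_left (B * (ρ * s))).congr fun n => ?_
    simp only [hε0]
    rw [Real.div_rpow (by positivity) (by positivity), Real.rpow_neg (x := 2) (by norm_num), div_inv_eq_mul]
  have hε0n : ∀ n, 0 ≤ ε0 n := fun n => by positivity
  have htail := tendsto_sum_nat_add ε0
  obtain ⟨n0, hn0⟩ := ((htail.eventually (gt_mem_nhds (show (0:ℝ) < 1/4 by norm_num))).and
    (eventually_gt_atTop (⌈2 * (max R0 R1)⌉₊))).exists
  have hn0' : 2 * max R0 R1 < n0 := by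
    exact Nat.lt_of_ceil_lt hn0.2
  have hRR0 : R0 ≤ (n0:ℝ)/2 := by
    have := le_max_left R0 R1
    linarith
  have hRR1 : R1 ≤ (n0:ℝ)/2 := by
    have := le_max_right R0 R1
    linarith
  refine ⟨n0/2, hRR0, by linarith, fun c hc => ?_⟩
  have hslit : ∀ w : ℂ, (n0:ℝ)/2 < w.re → w ∈ slitPlane := fun w hw => Or.inl (by linarith)
  have hsd : ∀ w : ℂ, (n0:ℝ)/2 < w.re → HasDerivAt (fun w : ℂ => c * w ^ ((-s : ℝ) : ℂ))
      (c * (((-s : ℝ) : ℂ) * w ^ (((-s : ℝ) : ℂ) - 1))) w := by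
    intro w hw
    have := (hasDerivAt_id w).cpow_const (c := ((-s : ℝ) : ℂ)) (hslit w hw)
    simpa using this.const_mul c
  have hFd : ∀ w : ℂ, (n0:ℝ)/2 < w.re → HasDerivAt (fun w : ℂ => w + 1 + E (c * w ^ ((-s : ℝ) : ℂ)))
      (1 + deriv E (c * w ^ ((-s : ℝ) : ℂ)) * (c * (((-s : ℝ) : ℂ) * w ^ (((-s : ℝ) : ℂ) - 1)))) w := by
    intro w hw
    have hl := hloc _ (hR1' c w hc (by linarith))
    exact ((hasDerivAt_id w).add_const 1).add (hl.1.hasDerivAt.comp w (hsd w hw))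
  obtain ⟨Φ, hΦ⟩ := halfplane_fatou (fun w : ℂ => w + 1 + E (c * w ^ ((-s : ℝ) : ℂ))) (n0/2)
    (fun n => ε0 (n + n0)) ((summable_nat_add_iff n0).2 hε0s) (fun n => hε0n _) hn0.1.le
    (fun w hw => (hFd w hw).differentiableAt)
    (fun w hw => by
      have e : w + 1 + E (c * w ^ ((-s : ℝ) : ℂ)) - w - 1 = E (c * w ^ ((-s : ℝ) : ℂ)) := by ring
      rw [e]
      exact (hloc _ (hR1' c w hc (by linarith))).2.2)
    (fun n w hw => by
      have hn : (0:ℝ) ≤ n/2 := by positivity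
      have hw1 : (n0:ℝ)/2 < w.re := by linarith
      rw [(hFd w hw1).deriv, add_sub_cancel_left]
      have hl := hloc _ (hR1' c w hc (by linarith))
      have e : ((-s : ℝ) : ℂ) - 1 = ((-(1 + s) : ℝ) : ℂ) := by push_cast; ring
      rw [norm_mul, norm_mul, norm_mul, e, norm_cpow_real, norm_real, Real.norm_eq_abs, abs_neg,
        abs_of_pos hs]
      simp only [hε0]
      have hpw : ‖w‖ ^ (-(1 + s)) ≤ (((n + n0 : ℕ) : ℝ)/2) ^ (-(1 + s)) := by
        refine Real.rpow_le_rpow_of_nonpos ?_ ?_ (by linarith)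
        · push_cast; linarith
        · refine le_trans ?_ (re_le_norm w)
          push_cast; linarith
      have : ‖deriv E (c * w ^ ((-s : ℝ) : ℂ))‖ * (‖c‖ * (s * ‖w‖ ^ (-(1 + s))))
        ≤ B * (ρ * (s * (((n + n0 : ℕ) : ℝ)/2) ^ (-(1 + s)))) := by
        have := hl.2.1
        gcongr
      refine this.trans (le_of_eq ?_)
      ring)
    (fun η hη => by
      have hc0 : ∀ᶠ z in 𝓝 (0:ℂ), ‖E z‖ < η :=
        hE.continuousAt.norm.eventually_lt_const (by simpa [hE0] using hη)
      rw [Metric.eventually_nhds_iff] at hc0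
      obtain ⟨κ, hκ, hk⟩ := hc0
      obtain ⟨R2, _, hR2⟩ := hσ κ hκ
      refine ⟨R2, fun w hw => ?_⟩
      have e : w + 1 + E (c * w ^ ((-s : ℝ) : ℂ)) - w - 1 = E (c * w ^ ((-s : ℝ) : ℂ)) := by ring
      rw [e]
      exact (hk (by simpa using hR2 c w hc hw)).le)
  refine ⟨Φ, fun w hw => ⟨(hloc _ (hR1' c w hc (by linarith))).2.2, hΦ w hw⟩⟩

theorem branch_lemma (m : ℕ) (hm : m ≠ 0) : ∀ᶠ v in 𝓝 (1:ℂ), ∀ y : ℂ, 0 < y.re →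
    (y * (v⁻¹) ^ m) ^ ((m:ℂ)⁻¹) * v = y ^ ((m:ℂ)⁻¹) := by
  have hpm : 0 < Real.pi / m := div_pos Real.pi_pos (by positivity)
  have harg : ContinuousAt arg (1:ℂ) := continuousAt_arg (by simp)
  have c1 : Tendsto (fun v : ℂ => arg (v⁻¹)) (𝓝 1) (𝓝 0) := by
    have h1 : Tendsto (fun v : ℂ => v⁻¹) (𝓝 1) (𝓝 1) := by
      simpa using (continuousAt_inv₀ (one_ne_zero (α := ℂ))).tendsto
    simpa [Function.comp_def] using harg.tendsto.comp h1
  have c2 : Tendsto (fun v : ℂ => arg ((v⁻¹)^m)) (𝓝 1) (𝓝 0) := by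
    have h1 : Tendsto (fun v : ℂ => (v⁻¹)^m) (𝓝 1) (𝓝 1) := by
      have h0 : ContinuousAt (fun v : ℂ => (v⁻¹)^m) 1 :=
        (continuousAt_inv₀ (one_ne_zero (α := ℂ))).pow m
      simpa using h0.tendsto
    simpa [Function.comp_def] using harg.tendsto.comp h1
  filter_upwards [c1.eventually (Ioo_mem_nhds (neg_lt_zero.2 hpm) hpm),
    c2.eventually (Ioo_mem_nhds (neg_lt_zero.2 Real.pi_div_two_pos) Real.pi_div_two_pos),
    eventually_ne_nhds (one_ne_zero (α := ℂ))] with v h1 h2 hv y hy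
  have hy0 : y ≠ 0 := by rintro rfl; simp at hy
  have hya := abs_lt.1 (abs_arg_lt_pi_div_two_iff.2 (Or.inl hy))
  have hvm : (v⁻¹)^m ≠ 0 := pow_ne_zero _ (inv_ne_zero hv)
  have hlog : log (y * (v⁻¹)^m) = log y + log ((v⁻¹)^m) :=
    (log_mul_eq_add_log_iff hy0 hvm).2 ⟨by linarith [h2.1], by linarith [h2.2]⟩
  rw [cpow_def_of_ne_zero (mul_ne_zero hy0 hvm), hlog, add_mul, exp_add,
    ← cpow_def_of_ne_zero hy0, ← cpow_def_of_ne_zero hvm,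
    pow_cpow_nat_inv hm h1.1 h1.2.le, mul_assoc, inv_mul_cancel₀ hv, mul_one]

theorem local_theory (f g : ℂ → ℂ) (m : ℕ) (hm : m ≠ 0) (hg : Differentiable ℂ g) (ha : g 0 ≠ 0)
    (hf : ∀ z, f z = z * (1 + z ^ m * g z)) (K : ℂ) (hK : K = -1 / (m * g 0)) :
    ∃ (V : Set ℂ) (ψ : ℂ → ℂ) (R : ℝ) (σ F : ℂ → ℂ), IsOpen V ∧ (0:ℂ) ∉ V ∧ (∀ z ∈ V, f z ∈ V) ∧
      (∀ z ∈ V, Tendsto (fun n => f^[n] z) atTop (𝓝 0)) ∧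
      (∀ z, Tendsto (fun n => f^[n] z) atTop (𝓝 0) → (∀ n, f^[n] z ≠ 0) → ∃ N, f^[N] z ∈ V) ∧
      (∀ z ∈ V, DifferentiableAt ℂ ψ z ∧ deriv ψ z ≠ 0 ∧ ψ (f z) = ψ z + 1 ∧
        Tendsto (fun n => deriv (fun y => K / (f^[n] y) ^ m) z) atTop (𝓝 (deriv ψ z))) ∧
      (∀ w : ℂ, R < w.re → σ w ∈ V ∧ DifferentiableAt ℂ σ w ∧
        ‖deriv (ψ ∘ σ) w - 1‖ ≤ 1/2 ∧ w.re + 1/2 ≤ (F w).re ∧ σ (F w) = f (σ w)) := by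
  have hm' : (m : ℂ) ≠ 0 := by exact_mod_cast hm
  have hK0 : K ≠ 0 := by
    rw [hK]
    exact div_ne_zero (by simp) (mul_ne_zero hm' ha)
  obtain ⟨E, hEa, hE0, hE⟩ := exists_E f g m hm hg ha hf K hK
  have hu : Continuous fun z : ℂ => 1 + z ^ m * g z := by
    have := hg.continuous
    fun_prop
  have hfd : Differentiable ℂ f := by
    have : f = fun z => z * (1 + z ^ m * g z) := funext hf
    rw [this]
    fun_prop
  have hu1 : Tendsto (fun z : ℂ => 1 + z ^ m * g z) (𝓝 0) (𝓝 1) := by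
    have := hu.tendsto 0
    simpa [hm] using this
  have hEhalf : ∀ᶠ z in 𝓝 (0:ℂ), ‖E z‖ < 1/2 :=
    hEa.continuousAt.norm.eventually_lt_const (by simp [hE0])
  obtain ⟨η, hη, hloc⟩ : ∃ η > 0, ∀ z : ℂ, ‖z‖ < η →
      (z ≠ 0 → K / (f z) ^ m = K / z ^ m + 1 + E z) ∧
      (∀ y : ℂ, 0 < y.re → (y * ((1 + z ^ m * g z)⁻¹) ^ m) ^ ((m:ℂ)⁻¹) * (1 + z ^ m * g z)
        = y ^ ((m:ℂ)⁻¹)) ∧ ‖E z‖ < 1/2 := by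
    have := hE.and ((hu1.eventually (branch_lemma m hm)).and hEhalf)
    rw [Metric.eventually_nhds_iff] at this
    obtain ⟨η, hη, h⟩ := this
    exact ⟨η, hη, fun z hz => h (by simpa using hz)⟩
  set W : ℂ → ℂ := fun z => K / z ^ m with hW
  set s : ℝ := (m:ℝ)⁻¹ with hs
  have hs0 : 0 < s := by positivity
  have hsc : ((s:ℝ):ℂ) = (m:ℂ)⁻¹ := by rw [hs]; push_cast; rfl
  have hnegs : ∀ w : ℂ, w ^ ((-s : ℝ) : ℂ) = (w ^ ((m:ℂ)⁻¹))⁻¹ := by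
    intro w; rw [ofReal_neg, cpow_neg, hsc]
  set cc : ℂ → ℂ := fun z => z * (W z) ^ ((m:ℂ)⁻¹) with hcc
  set σ : ℂ → ℂ → ℂ := fun c w => c * w ^ ((-s : ℝ) : ℂ) with hσ
  have hW0 : ∀ z, z ≠ 0 → W z ≠ 0 := fun z hz => div_ne_zero hK0 (pow_ne_zero _ hz)
  have hrt0 : ∀ w : ℂ, w ≠ 0 → w ^ ((m:ℂ)⁻¹) ≠ 0 := fun w hw => by
    rw [cpow_def_of_ne_zero hw]; exact exp_ne_zero _
  have hσcc : ∀ z, z ≠ 0 → σ (cc z) (W z) = z := by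
    intro z hz
    simp only [hσ, hcc, hnegs]
    rw [mul_assoc, mul_inv_cancel₀ (hrt0 _ (hW0 z hz)), mul_one]
  have hccm : ∀ z, z ≠ 0 → (cc z) ^ m = K := by
    intro z hz
    simp only [hcc]
    rw [mul_pow, cpow_nat_inv_pow _ hm]
    simp only [hW]
    field_simp
  have hWσ : ∀ c w : ℂ, c ^ m = K → w ≠ 0 → W (σ c w) = w := by
    intro c w hc hw
    simp only [hW, hσ, hnegs]
    rw [mul_pow, hc, inv_pow, cpow_nat_inv_pow _ hm]
    field_simp
  have hccσ : ∀ c w : ℂ, c ^ m = K → w ≠ 0 → cc (σ c w) = c := by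
    intro c w hc hw
    have := hWσ c w hc hw
    simp only [hcc, this]
    simp only [hσ, hnegs]
    rw [mul_assoc, inv_mul_cancel₀ (hrt0 _ hw), mul_one]
  have hsmall : ∀ η' > 0, ∀ z : ℂ, z ≠ 0 → ‖K‖ / η' ^ m < (W z).re → ‖z‖ < η' := by
    intro η' hη' z hz h
    have h1 := h.trans_le (re_le_norm _)
    simp only [hW, norm_div, norm_pow] at h1
    have hz' : 0 < ‖z‖ := norm_pos_iff.2 hz
    have hKp : 0 < ‖K‖ := norm_pos_iff.2 hK0
    rw [div_lt_div_iff_of_pos_left hKp (by positivity) (by positivity)] at h1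
    exact lt_of_pow_lt_pow_left₀ m hη'.le h1
  have hcbound : ∀ c : ℂ, c ^ m = K → ‖c‖ ≤ ‖K‖ + 1 := by
    intro c hc
    by_contra hcon
    push Not at hcon
    have h1 : 1 ≤ ‖c‖ := by linarith [norm_nonneg K]
    have := le_self_pow₀ h1 hm
    rw [← norm_pow, hc] at this
    linarith
  obtain ⟨R, hR0, hRpos, hΦ'⟩ := specific_fatou E hEa hE0 s hs0 (‖K‖ + 1) (by positivity) (‖K‖ / η ^ m)
  choose! Φ hΦ using hΦ'
  have hVne : ∀ z, R < (W z).re → z ≠ 0 := by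
    rintro z hz rfl
    simp [hW, hm] at hz
    linarith
  have hVsmall : ∀ z, R < (W z).re → ‖z‖ < η := fun z hz =>
    hsmall η hη z (hVne z hz) (lt_of_le_of_lt hR0 hz)
  have hVeq : ∀ z, R < (W z).re → W (f z) = W z + 1 + E z := fun z hz =>
    (hloc z (hVsmall z hz)).1 (hVne z hz)
  have hincr : ∀ z, ‖z‖ < η → z ≠ 0 → (W z).re + 1/2 ≤ (W (f z)).re := by
    intro z hz hz0
    have e : W (f z) = W z + 1 + E z := (hloc z hz).1 hz0
    have := (abs_le.1 ((abs_re_le_norm (E z)).trans (hloc z hz).2.2.le)).1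
    rw [e]; simp only [add_re, one_re]; linarith
  have hfV : ∀ z, R < (W z).re → R < (W (f z)).re := by
    intro z hz
    have := hincr z (hVsmall z hz) (hVne z hz)
    linarith
  have hfccV : ∀ z, R < (W z).re → cc (f z) = cc z := by
    intro z hz
    have h := (hloc z (hVsmall z hz)).2.1 (W z) (by linarith)
    have e : W (f z) = W z * ((1 + z ^ m * g z)⁻¹) ^ m := by
      simp only [hW]
      rw [hf z, mul_pow, inv_pow, div_mul_eq_div_div, div_eq_mul_inv]
    simp only [hcc]
    rw [e, ← h, hf z]
    ring
  have hFiter : ∀ (n : ℕ) z, R < (W z).re →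
      (fun w => w + 1 + E (σ (cc z) w))^[n] (W z) = W (f^[n] z) := by
    intro n
    induction n with
    | zero => intro z hz; rfl
    | succ n ih =>
      intro z hz
      rw [Function.iterate_succ_apply, Function.iterate_succ_apply]
      have := ih (f z) (hfV z hz)
      rw [hfccV z hz] at this
      rw [← this, hVeq z hz, hσcc z (hVne z hz)]
  have hΦz : ∀ z, R < (W z).re → _ := fun z hz =>
    hΦ (cc z) (hcbound _ (hccm z (hVne z hz))) (W z) hz
  have hWd : ∀ z, z ≠ 0 → HasDerivAt W (-(K * (m * z ^ (m - 1))) / (z ^ m) ^ 2) z := by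
    intro z hz
    have := (hasDerivAt_const z K).fun_div (hasDerivAt_pow m z) (pow_ne_zero m hz)
    simp only [zero_mul, zero_sub] at this
    exact this
  have hWd0 : ∀ z, z ≠ 0 → deriv W z ≠ 0 := by
    intro z hz
    rw [(hWd z hz).deriv]
    have := pow_ne_zero m hz
    have h2 := pow_ne_zero (m-1) hz
    refine div_ne_zero (neg_ne_zero.2 ?_) (by positivity)
    positivity
  have hVopen : IsOpen {z | R < (W z).re} := by
    rw [isOpen_iff_mem_nhds]
    intro z hz
    have : ContinuousAt (fun z => (W z).re) z :=
      continuous_re.continuousAt.comp (hWd z (hVne z hz)).continuousAt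
    exact this.eventually (lt_mem_nhds hz)
  have hcconst : ∀ z, R < (W z).re → ∀ᶠ z' in 𝓝 z, cc z' = cc z := by
    intro z hz
    have hct : ContinuousAt cc z := by
      refine continuousAt_id.mul ?_
      have hWc := (hWd z (hVne z hz)).continuousAt
      exact ContinuousAt.cpow hWc continuousAt_const (Or.inl (by linarith))
    have hfin : {c : ℂ | c ^ m = K ∧ c ≠ cc z}.Finite := by
      refine (Polynomial.nthRoots m K).toFinset.finite_toSet.subset ?_
      intro c hc
      simp [Polynomial.mem_nthRoots (Nat.pos_of_ne_zero hm), hc.1]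
    have hev := hct.eventually (hfin.isClosed.isOpen_compl.mem_nhds (by simp))
    filter_upwards [hev, hVopen.mem_nhds hz] with z' h1 h2
    by_contra h3
    exact h1 ⟨hccm z' (hVne z' h2), h3⟩
  set ψ : ℂ → ℂ := fun z => Φ (cc z) (W z) with hψ
  have hψd : ∀ z, R < (W z).re → HasDerivAt ψ (deriv (Φ (cc z)) (W z) * deriv W z) z := by
    intro z hz
    have h1 : HasDerivAt (Φ (cc z) ∘ W) (deriv (Φ (cc z)) (W z) * deriv W z) z :=
      (hΦz z hz).2.1.hasDerivAt.comp z (hWd z (hVne z hz)).differentiableAt.hasDerivAt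
    refine h1.congr_of_eventuallyEq ?_
    filter_upwards [hcconst z hz] with z' hz'
    simp only [hψ, hz', Function.comp]
  obtain ⟨c, hc⟩ := IsAlgClosed.exists_pow_nat_eq K (Nat.pos_of_ne_zero hm)
  have hwne : ∀ w : ℂ, R < w.re → w ≠ 0 := by
    rintro w hw rfl
    simp at hw; linarith
  refine ⟨{z | R < (W z).re}, ψ, R, σ c, fun w => w + 1 + E (σ c w), hVopen, fun h => hVne 0 h rfl, hfV,
    ?_, ?_, ?_, ?_⟩
  · intro z hz
    have hVn : ∀ n : ℕ, R < (W (f^[n] z)).re ∧ R + n/2 < (W (f^[n] z)).re := by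
      intro n
      induction n with
      | zero => 
        have : R < (W z).re := hz
        simpa using this
      | succ n ih =>
        rw [Function.iterate_succ_apply']
        refine ⟨hfV _ ih.1, ?_⟩
        have := hincr _ (hVsmall _ ih.1) (hVne _ ih.1)
        push_cast; linarith [ih.2]
    rw [Metric.tendsto_atTop]
    intro δ hδ
    obtain ⟨N, hN⟩ := exists_nat_gt (2 * (‖K‖ / δ ^ m))
    refine ⟨N, fun n hn => ?_⟩
    rw [dist_zero_right]
    have hnN : (N:ℝ) ≤ n := by exact_mod_cast hn
    exact hsmall δ hδ _ (hVne _ (hVn n).1) (by linarith [(hVn n).2])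
  · intro z ht hne
    obtain ⟨N, hN⟩ := (ht.norm.eventually (gt_mem_nhds (by simpa using hη))).exists_forall_of_atTop
    have hk : ∀ k : ℕ, (W (f^[N] z)).re + k/2 ≤ (W (f^[N + k] z)).re := by
      intro k
      induction k with
      | zero => simp
      | succ k ih =>
        have := hincr (f^[N+k] z) (hN (N+k) (by omega)) (hne _)
        rw [← add_assoc, Function.iterate_succ_apply']
        push_cast; linarith
    obtain ⟨k, hk'⟩ := exists_nat_gt (2 * (R - (W (f^[N] z)).re))
    refine ⟨N + k, ?_⟩
    have := hk k
    show R < (W (f^[N + k] z)).re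
    linarith
  · intro z hz
    have hz : R < (W z).re := hz
    obtain ⟨_, p2, p3, p4, p5, p6⟩ := hΦz z hz
    refine ⟨(hψd z hz).differentiableAt, ?_, ?_, ?_⟩
    · rw [(hψd z hz).deriv]
      refine mul_ne_zero ?_ (hWd0 z (hVne z hz))
      intro h0
      rw [h0] at p4
      norm_num at p4
    · simp only [hψ]
      rw [hfccV z hz, hVeq z hz, ← p3]
      have := hσcc z (hVne z hz)
      simp only [hσ] at this
      rw [this]
    · rw [(hψd z hz).deriv]
      refine (p6.mul_const (deriv W z)).congr fun n => ?_
      -- differentiability of the iterates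
      have hdn : DifferentiableAt ℂ ((fun w => w + 1 + E (cc z * w ^ ((-s : ℝ) : ℂ)))^[n]) (W z) := p5 n
      have hcomp := hdn.hasDerivAt.comp z (hWd z (hVne z hz)).differentiableAt.hasDerivAt
      rw [← hcomp.deriv]
      refine EventuallyEq.deriv_eq ?_
      filter_upwards [hcconst z hz, hVopen.mem_nhds hz] with z' h1 h2
      have := hFiter n z' h2
      rw [h1] at this
      exact this
  · intro w hw
    have hw0 := hwne w hw
    have hWw := hWσ c w hc hw0
    have hV : R < (W (σ c w)).re := by rw [hWw]; exact hw
    have hsd : DifferentiableAt ℂ (σ c) w := by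
      have := (hasDerivAt_id w).cpow_const (c := ((-s : ℝ) : ℂ)) (Or.inl (by simp; linarith))
      exact (this.const_mul c).differentiableAt
    refine ⟨hV, hsd, ?_, ?_, ?_⟩
    · have p := hΦ c (hcbound c hc) w hw
      have : deriv (ψ ∘ σ c) w = deriv (Φ c) w := by
        refine EventuallyEq.deriv_eq ?_
        filter_upwards [(isOpen_lt continuous_const continuous_re).mem_nhds hw] with w' hw'
        simp only [Function.comp, hψ]
        rw [hccσ c w' hc (hwne w' hw'), hWσ c w' hc (hwne w' hw')]
      rw [this]
      exact p.2.2.2.1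
    · have := hincr _ (hVsmall _ hV) (hVne _ hV)
      rw [hVeq _ hV, hWw] at this
      exact this
    · have e : w + 1 + E (σ c w) = W (f (σ c w)) := by rw [hVeq _ hV, hWw]
      have h2 := hσcc (f (σ c w)) (hVne _ (hfV _ hV))
      rw [hfccV _ hV, hccσ c w hc hw0] at h2
      simp only []
      rw [e, h2]

theorem Pq_hasDerivAt (ω z : ℂ) : HasDerivAt (Pq ω) (ω + 2 * z) z := by
  have := ((hasDerivAt_id' z).const_mul ω).fun_add (hasDerivAt_pow 2 z)
  norm_num at this
  exact this

theorem Pq_diff (ω : ℂ) : Differentiable ℂ (Pq ω) := fun z => (Pq_hasDerivAt ω z).differentiableAt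

theorem Pq_zero (ω : ℂ) : Pq ω 0 = 0 := by simp [Pq]

theorem Pq_iter_zero (ω : ℂ) (n : ℕ) : (Pq ω)^[n] 0 = 0 :=
  Function.iterate_fixed (Pq_zero ω) n

theorem Pq_surj (ω : ℂ) : Function.Surjective (Pq ω) := by
  intro y
  obtain ⟨t, ht⟩ := IsAlgClosed.exists_pow_nat_eq (y + ω ^ 2 / 4) (n := 2) (by norm_num)
  refine ⟨t - ω / 2, ?_⟩
  simp only [Pq]
  linear_combination ht

theorem Pq_iter_deriv_zero (ω : ℂ) (n : ℕ) : deriv ((Pq ω)^[n]) 0 = ω ^ n := by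
  induction n with
  | zero => simp [Function.iterate_zero]
  | succ n ih =>
    rw [Function.iterate_succ', deriv_comp _ (Pq_diff ω _) ((Pq_diff ω).iterate n 0), Pq_iter_zero, ih,
      (Pq_hasDerivAt ω 0).deriv]
    ring

theorem Pq_iter_deriv (ω : ℂ) (n : ℕ) (z : ℂ) :
    deriv ((Pq ω)^[n]) z = 0 ↔ ∃ k < n, (Pq ω)^[k] z = -ω / 2 := by
  induction n with
  | zero => simp [Function.iterate_zero]
  | succ n ih =>
    rw [Function.iterate_succ', deriv_comp _ (Pq_diff ω _) ((Pq_diff ω).iterate n z),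
      (Pq_hasDerivAt ω _).deriv, mul_eq_zero, ih]
    constructor
    · rintro (h | ⟨k, hk, h⟩)
      · exact ⟨n, by omega, by linear_combination h / 2⟩
      · exact ⟨k, by omega, h⟩
    · rintro ⟨k, hk, h⟩
      rcases Nat.lt_succ_iff_lt_or_eq.1 hk with h' | rfl
      · exact Or.inr ⟨k, h', h⟩
      · left; rw [h]; ring

open Polynomial in
theorem normal_form (ω : ℂ) (q : ℕ) (hq : q ≠ 0) (hω : ω ^ q = 1) :
    ∃ (m : ℕ) (g : ℂ → ℂ), m ≠ 0 ∧ Differentiable ℂ g ∧ g 0 ≠ 0 ∧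
      (∀ z, (Pq ω)^[q] z = z * (1 + z ^ m * g z)) := by
  set p : ℂ[X] := C ω * X + X ^ 2 with hp
  have hpdeg : p.natDegree = 2 := by
    rw [hp]; compute_degree!
  set G : ℂ[X] := p.comp^[q] X with hG
  have hGeval : ∀ z, G.eval z = (Pq ω)^[q] z := by
    intro z
    rw [hG, iterate_comp_eval]
    congr 1
    · ext x; simp [hp, Pq]
    · simp
  have hGne : G - X ≠ 0 := by
    intro h
    have h1 : G.natDegree = 2 ^ q := by rw [hG, natDegree_iterate_comp, hpdeg]; simp
    rw [sub_eq_zero.1 h, natDegree_X] at h1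
    have : 1 < 2 ^ q := Nat.one_lt_two_pow hq
    omega
  obtain ⟨Q, hQ, hQ'⟩ := exists_eq_pow_rootMultiplicity_mul_and_not_dvd (G - X) hGne 0
  set k := rootMultiplicity 0 (G - X) with hk
  have hQ0 : Q.eval 0 ≠ 0 := by
    intro h
    exact hQ' (dvd_iff_isRoot.2 h)
  have hk2 : 1 < k := by
    rw [hk]
    rw [one_lt_rootMultiplicity_iff_isRoot hGne]
    constructor
    · simp [IsRoot, hGeval, Pq_iter_zero]
    · have : G.derivative.eval 0 = 1 := by
        rw [← Polynomial.deriv, show (fun x => G.eval x) = (Pq ω)^[q] from funext hGeval,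
          Pq_iter_deriv_zero, hω]
      simp [IsRoot, this]
  refine ⟨k - 1, fun z => Q.eval z, by omega, Q.differentiable, hQ0, fun z => ?_⟩
  have h := congrArg (eval z) hQ
  simp only [eval_sub, eval_X, eval_mul, eval_pow, hGeval, C_0, sub_zero] at h
  have e : z ^ k = z * z ^ (k - 1) := by
    rw [← pow_succ']; congr 1; omega
  rw [e] at h
  linear_combination h

theorem root_of_unity (ω : ℂ) (q m : ℕ) (g : ℂ → ℂ) (hω : ω ≠ 0) (hm : m ≠ 0)
    (hg : Differentiable ℂ g) (ha : g 0 ≠ 0)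
    (hf : ∀ z, (Pq ω)^[q] z = z * (1 + z ^ m * g z)) : ω ^ m = 1 := by
  have hgc := hg.continuous
  have hPc : Continuous (Pq ω) := (Pq_diff ω).continuous
  have hfc : Continuous ((Pq ω)^[q]) := hPc.iterate q
  have key : ∀ z : ℂ, z ≠ 0 → (ω + z) ^ (m+1) * g (Pq ω z) = g z * (ω + (Pq ω)^[q] z + z) := by
    intro z hz
    have h1 : (Pq ω)^[q] (Pq ω z) = Pq ω ((Pq ω)^[q] z) := by
      rw [← Function.iterate_succ_apply, Function.iterate_succ_apply']
    rw [hf (Pq ω z)] at h1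
    have h2 : Pq ω ((Pq ω)^[q] z) - Pq ω z = ((Pq ω)^[q] z - z) * (ω + (Pq ω)^[q] z + z) := by
      simp only [Pq]; ring
    have h3 : (Pq ω)^[q] z - z = z ^ (m+1) * g z := by rw [hf]; ring
    rw [h3] at h2
    have h4 : Pq ω z = z * (ω + z) := by simp only [Pq]; ring
    have h5 : Pq ω z ^ (m+1) = z ^ (m+1) * (ω + z)^(m+1) := by rw [h4, mul_pow]
    have hz1 := pow_ne_zero (m+1) hz
    apply mul_left_cancel₀ hz1
    linear_combination h1 + h2 - g (Pq ω z) * h5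
  have t1 : Tendsto (fun z : ℂ => (ω + z) ^ (m+1) * g (Pq ω z)) (𝓝[≠] 0) (𝓝 (ω ^ (m+1) * g 0)) := by
    have : Continuous (fun z : ℂ => (ω + z) ^ (m+1) * g (Pq ω z)) := by fun_prop
    have := this.tendsto 0
    simp only [add_zero, Pq_zero] at this
    exact this.mono_left nhdsWithin_le_nhds
  have t2 : Tendsto (fun z : ℂ => g z * (ω + (Pq ω)^[q] z + z)) (𝓝[≠] 0) (𝓝 (g 0 * ω)) := by
    have : Continuous (fun z : ℂ => g z * (ω + (Pq ω)^[q] z + z)) := by fun_prop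
    have := this.tendsto 0
    simp only [add_zero, Pq_iter_zero] at this
    exact this.mono_left nhdsWithin_le_nhds
  have t3 : Tendsto (fun z : ℂ => g z * (ω + (Pq ω)^[q] z + z)) (𝓝[≠] 0) (𝓝 (ω ^ (m+1) * g 0)) :=
    t1.congr' (eventually_nhdsWithin_of_forall fun z hz => key z hz)
  have := tendsto_nhds_unique t3 t2
  have h6 : (ω * g 0) * ω ^ m = (ω * g 0) * 1 := by rw [pow_succ] at this; linear_combination this
  exact mul_left_cancel₀ (mul_ne_zero hω ha) h6

theorem basin_fwd (ω z : ℂ) (hz : z ∈ basin ω) : Pq ω z ∈ basin ω := by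
  refine ⟨?_, ?_⟩
  · have h : Tendsto (fun n => (Pq ω)^[n] z) atTop (𝓝 0) := hz.1
    have := (tendsto_add_atTop_iff_nat 1).2 h
    exact this
  · rintro ⟨n, hn⟩
    exact hz.2 ⟨n+1, hn⟩

theorem basin_fwd_iter (ω z : ℂ) (n : ℕ) (hz : z ∈ basin ω) : (Pq ω)^[n] z ∈ basin ω := by
  induction n with
  | zero => exact hz
  | succ n ih => rw [Function.iterate_succ_apply']; exact basin_fwd ω _ ih

theorem basin_bwd (ω z : ℂ) (hz : Pq ω z ∈ basin ω) : z ∈ basin ω := by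
  refine ⟨?_, ?_⟩
  · have h : Tendsto (fun n => (Pq ω)^[n] (Pq ω z)) atTop (𝓝 0) := hz.1
    exact (tendsto_add_atTop_iff_nat 1).1 h
  · rintro ⟨n, hn⟩
    refine hz.2 ⟨n, ?_⟩
    rw [← Function.iterate_succ_apply, Function.iterate_succ_apply', hn, Pq_zero]

theorem basin_bwd_iter (ω : ℂ) (n : ℕ) : ∀ z, (Pq ω)^[n] z ∈ basin ω → z ∈ basin ω := by
  induction n with
  | zero => exact fun z hz => hz
  | succ n ih => exact fun z hz => basin_bwd ω z (ih _ hz)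

theorem mem_basin_of_iter (ω : ℂ) (q : ℕ) (hq : q ≠ 0) (z : ℂ)
    (h : Tendsto (fun n => ((Pq ω)^[q])^[n] z) atTop (𝓝 0)) (h0 : ∀ n, ((Pq ω)^[q])^[n] z ≠ 0) :
    z ∈ basin ω := by
  refine ⟨?_, ?_⟩
  · show Tendsto (fun n => (Pq ω)^[n] z) atTop (𝓝 0)
    have hPc : Continuous (Pq ω) := (Pq_diff ω).continuous
    intro U hU
    have h1 : ∀ r ∈ Finset.range q, ∀ᶠ n in atTop, (Pq ω)^[r] (((Pq ω)^[q])^[n] z) ∈ U := by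
      intro r _
      have := ((hPc.iterate r).tendsto 0).comp h
      rw [Pq_iter_zero] at this
      exact this hU
    have h2 : ∀ᶠ n in atTop, ∀ r ∈ Finset.range q, (Pq ω)^[r] (((Pq ω)^[q])^[n] z) ∈ U :=
      (Filter.eventually_all_finset _).2 h1
    rw [mem_map]
    filter_upwards [(Nat.tendsto_div_const_atTop hq).eventually h2] with k hk
    have := hk (k % q) (Finset.mem_range.2 (Nat.mod_lt _ (Nat.pos_of_ne_zero hq)))
    rw [← Function.iterate_mul, ← Function.iterate_add_apply, Nat.mod_add_div] at this
    exact this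
  · rintro ⟨n, hn⟩
    refine h0 n ?_
    rw [← Function.iterate_mul]
    have e : q * n = (q * n - n) + n := by
      have : n ≤ q * n := Nat.le_mul_of_pos_left _ (Nat.pos_of_ne_zero hq)
      omega
    rw [e, Function.iterate_add_apply, hn, Pq_iter_zero]

theorem main_aux (q : ℕ) (hq : q ≠ 0) (ω : ℂ) (hω : ω ^ q = 1) :
    ∃ φ : ℂ → ℂ,
      (∀ z ∈ basin ω, DifferentiableAt ℂ φ z) ∧
      (∀ w : ℂ, ∃ z ∈ basin ω, φ z = w) ∧
      (∀ z ∈ basin ω, φ (Pq ω z) = 1 / (q : ℂ) + φ z) ∧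
      (∀ z ∈ basin ω, (deriv φ z = 0 ↔ ∃ n : ℕ, (Pq ω)^[n] z = -ω / 2)) := by
  have hω0 : ω ≠ 0 := by
    rintro rfl
    rw [zero_pow hq] at hω
    exact zero_ne_one hω
  have hq' : (q : ℂ) ≠ 0 := by exact_mod_cast hq
  obtain ⟨m, g, hm, hg, ha, hf⟩ := normal_form ω q hq hω
  have hωm := root_of_unity ω q m g hω0 hm hg ha hf
  have hm' : (m : ℂ) ≠ 0 := by exact_mod_cast hm
  set f : ℂ → ℂ := (Pq ω)^[q] with hfdef
  obtain ⟨K, hK⟩ : ∃ K : ℂ, K = -1 / (m * g 0) := ⟨_, rfl⟩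
  have hK0 : K ≠ 0 := by
    rw [hK]
    exact div_ne_zero (by simp) (mul_ne_zero hm' ha)
  obtain ⟨V, ψ0, R, σ, F, hVo, hV0, hVf, hVt, hVe, hψ0, hσ⟩ := local_theory f g m hm hg ha hf K hK
  have hPd := Pq_diff ω
  have hfd : Differentiable ℂ f := hPd.iterate q
  have hfit : ∀ (n : ℕ), f^[n] = (Pq ω)^[q * n] := fun n => (Function.iterate_mul _ _ _).symm
  have hVn : ∀ (n : ℕ) z, z ∈ V → f^[n] z ∈ V ∧ ψ0 (f^[n] z) = ψ0 z + n := by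
    intro n z hz
    induction n with
    | zero => simpa using hz
    | succ n ih =>
      rw [Function.iterate_succ_apply']
      refine ⟨hVf _ ih.1, ?_⟩
      rw [(hψ0 _ ih.1).2.2.1, ih.2]
      push_cast; ring
  have hVmono : ∀ z (M N : ℕ), M ≤ N → f^[M] z ∈ V →
      f^[N] z ∈ V ∧ ψ0 (f^[N] z) - N = ψ0 (f^[M] z) - M := by
    intro z M N hMN hM
    obtain ⟨k, rfl⟩ := Nat.exists_eq_add_of_le hMN
    have := hVn k _ hM
    rw [← Function.iterate_add_apply, add_comm k M] at this
    refine ⟨this.1, ?_⟩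
    rw [this.2]; push_cast; ring
  have hVb : ∀ z ∈ V, z ∈ basin ω := fun z hz =>
    mem_basin_of_iter ω q hq z (hVt z hz) fun n h0 => hV0 (by
      have := (hVn n z hz).1
      rw [h0] at this
      exact this)
  have hB : ∀ z ∈ basin ω, ∃ N, f^[N] z ∈ V := by
    intro z hz
    refine hVe z ?_ fun n h0 => hz.2 ⟨q * n, by rw [← hfit]; exact h0⟩
    have h : Tendsto (fun n => (Pq ω)^[n] z) atTop (𝓝 0) := hz.1
    have h2 := h.comp (tendsto_id.const_mul_atTop' (Nat.pos_of_ne_zero hq))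
    refine h2.congr fun n => ?_
    rw [hfit]; rfl
  classical
  set ψ : ℂ → ℂ := fun z => if h : ∃ N, f^[N] z ∈ V then ψ0 (f^[h.choose] z) - h.choose else 0 with hψdef
  have hψ : ∀ z N, f^[N] z ∈ V → ψ z = ψ0 (f^[N] z) - N := by
    intro z N hN
    have hex : ∃ N, f^[N] z ∈ V := ⟨N, hN⟩
    simp only [hψdef, dif_pos hex]
    rcases le_total hex.choose N with h | h
    · exact (hVmono z _ _ h hex.choose_spec).2.symm
    · exact (hVmono z _ _ h hN).2
  have hψd : ∀ z N, f^[N] z ∈ V → HasDerivAt ψ (deriv ψ0 (f^[N] z) * deriv (f^[N]) z) z := by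
    intro z N hN
    have h1 := ((hψ0 _ hN).1.hasDerivAt.comp z (hfd.iterate N z).hasDerivAt).sub_const (N : ℂ)
    refine h1.congr_of_eventuallyEq ?_
    have := (hfd.continuous.iterate N).continuousAt.eventually (hVo.mem_nhds hN)
    filter_upwards [this] with z' hz'
    exact hψ z' N hz'
  have hψda : ∀ z ∈ basin ω, DifferentiableAt ℂ ψ z := by
    intro z hz
    obtain ⟨N, hN⟩ := hB z hz
    exact (hψd z N hN).differentiableAt
  have hne : ∀ z ∈ basin ω, ∀ n, f^[n] z ≠ 0 := fun z hz n h0 =>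
    hz.2 ⟨q * n, by rw [← hfit]; exact h0⟩
  have hWd : ∀ y : ℂ, y ≠ 0 → HasDerivAt (fun y => K / y ^ m) (-(K * m) / y ^ (m + 1)) y := by
    intro y hy
    have := (hasDerivAt_const y K).fun_div (hasDerivAt_pow m y) (pow_ne_zero m hy)
    refine this.congr_deriv ?_
    obtain ⟨k, rfl⟩ := Nat.exists_eq_succ_of_ne_zero hm
    simp only [Nat.succ_eq_add_one, Nat.add_sub_cancel]
    field_simp
    ring
  have hψlim : ∀ z ∈ basin ω,
      Tendsto (fun n => deriv (fun y => K / (f^[n] y) ^ m) z) atTop (𝓝 (deriv ψ z)) := by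
    intro z hz
    obtain ⟨N, hN⟩ := hB z hz
    rw [(hψd z N hN).deriv, ← tendsto_add_atTop_iff_nat N]
    refine ((hψ0 _ hN).2.2.2.mul_const (deriv (f^[N]) z)).congr fun n => ?_
    have hd : DifferentiableAt ℂ (fun y => K / (f^[n] y) ^ m) (f^[N] z) := by
      have := (hWd (f^[n] (f^[N] z)) (by rw [← Function.iterate_add_apply]; exact hne z hz _)).differentiableAt
      exact this.comp _ (hfd.iterate n _)
    rw [← deriv_comp z hd (hfd.iterate N z)]
    congr 1
    ext y
    simp only [Function.comp, Function.iterate_add_apply]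
  have hψP : ∀ z ∈ basin ω, deriv (ψ ∘ Pq ω) z = deriv ψ z := by
    intro z hz
    have hPz := basin_fwd ω z hz
    rw [deriv_comp z (hψda _ hPz) (hPd z)]
    have t1 := (hψlim _ hPz).mul_const (deriv (Pq ω) z)
    have hz0 : Tendsto (fun n => f^[n] z) atTop (𝓝 0) := by
      obtain ⟨N, hN⟩ := hB z hz
      have := hVt _ hN
      rw [← tendsto_add_atTop_iff_nat N]
      refine this.congr fun n => ?_
      rw [Function.iterate_add_apply]
    have t2 : Tendsto (fun y : ℂ => (ω + 2 * y) / (ω + y) ^ (m + 1)) (𝓝 0) (𝓝 1) := by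
      have hc : ContinuousAt (fun y : ℂ => (ω + 2 * y) / (ω + y) ^ (m + 1)) 0 := by
        refine ContinuousAt.div (by fun_prop) (by fun_prop) ?_
        simpa using hω0
      have := hc.tendsto
      simp only [mul_zero, add_zero, pow_succ, hωm, one_mul, div_self hω0] at this
      simpa [pow_succ] using this
    have t3 := (t2.comp hz0).mul (hψlim z hz)
    rw [one_mul] at t3
    refine tendsto_nhds_unique t1 (t3.congr fun n => ?_)
    have hy0 := hne z hz n
    have hPy : f^[n] (Pq ω z) = Pq ω (f^[n] z) := by
      rw [hfit, ← Function.iterate_succ_apply, Function.iterate_succ_apply']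
    have hPy0 : Pq ω (f^[n] z) ≠ 0 := by rw [← hPy]; exact hne _ hPz n
    have d1 : HasDerivAt (fun y => K / (f^[n] y) ^ m) _ z :=
      (hWd _ hy0).comp z (hfd.iterate n z).hasDerivAt
    have d2 : HasDerivAt (fun y => K / (f^[n] y) ^ m) _ (Pq ω z) :=
      (hWd _ (hne _ hPz n)).comp (Pq ω z) (hfd.iterate n _).hasDerivAt
    have d3 : deriv (f^[n]) (Pq ω z) * deriv (Pq ω) z = deriv (Pq ω) (f^[n] z) * deriv (f^[n]) z := by
      rw [← deriv_comp z (hfd.iterate n _) (hPd z), ← deriv_comp z (hPd _) (hfd.iterate n z)]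
      congr 1
      rw [hfit, ← Function.iterate_succ, ← Function.iterate_succ']
    rw [d1.deriv, d2.deriv, mul_assoc, d3, hPy, (Pq_hasDerivAt ω _).deriv]
    simp only [Function.comp]
    have e : Pq ω (f^[n] z) = f^[n] z * (ω + f^[n] z) := by simp only [Pq]; ring
    rw [e] at hPy0 ⊢
    have h7 := right_ne_zero_of_mul hPy0
    rw [mul_pow]
    field_simp
  have hψPj : ∀ (j : ℕ), ∀ z ∈ basin ω, DifferentiableAt ℂ (fun z => ψ ((Pq ω)^[j] z)) z ∧
      deriv (fun z => ψ ((Pq ω)^[j] z)) z = deriv ψ z := by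
    intro j
    induction j with
    | zero => exact fun z hz => ⟨hψda z hz, rfl⟩
    | succ j ih =>
      intro z hz
      have hPz := basin_fwd ω z hz
      obtain ⟨i1, i2⟩ := ih _ hPz
      refine ⟨i1.comp z (hPd z), ?_⟩
      have : (fun z => ψ ((Pq ω)^[j+1] z)) = (fun z => ψ ((Pq ω)^[j] z)) ∘ Pq ω := rfl
      rw [this, deriv_comp z i1 (hPd z), i2, ← deriv_comp z (hψda _ hPz) (hPd z)]
      exact hψP z hz
  have hψf : ∀ z ∈ basin ω, ψ ((Pq ω)^[q] z) = ψ z + 1 := by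
    intro z hz
    obtain ⟨N, hN⟩ := hB z hz
    have h1 := (hVmono z N (N+1) (by omega) hN).1
    rw [hψ z (N+1) h1, hψ ((Pq ω)^[q] z) N h1]
    push_cast
    rw [Function.iterate_succ_apply]
    ring
  set φ : ℂ → ℂ := fun z => (1 / (q:ℂ)) * ∑ j ∈ Finset.range q, ψ ((Pq ω)^[j] z) with hφ
  have hφd : ∀ z ∈ basin ω, HasDerivAt φ (deriv ψ z) z := by
    intro z hz
    have h1 : HasDerivAt (fun z => ∑ j ∈ Finset.range q, ψ ((Pq ω)^[j] z))
        (∑ j ∈ Finset.range q, deriv ψ z) z := by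
      refine HasDerivAt.fun_sum fun j _ => ?_
      have := hψPj j z hz
      rw [← this.2]
      exact this.1.hasDerivAt
    have := h1.const_mul (1 / (q:ℂ))
    refine this.congr_deriv ?_
    simp only [Finset.sum_const, Finset.card_range, nsmul_eq_mul]
    field_simp
  have hφP : ∀ z ∈ basin ω, φ (Pq ω z) = 1 / (q : ℂ) + φ z := by
    intro z hz
    show (1 / (q:ℂ)) * ∑ j ∈ Finset.range q, ψ ((Pq ω)^[j+1] z) = 1 / (q:ℂ) + (1 / (q:ℂ)) * ∑ j ∈ Finset.range q, ψ ((Pq ω)^[j] z)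
    have h1 := Finset.sum_range_succ' (fun j => ψ ((Pq ω)^[j] z)) q
    have h2 := Finset.sum_range_succ (fun j => ψ ((Pq ω)^[j] z)) q
    rw [hψf z hz] at h2
    simp only [Function.iterate_zero, id] at h1
    have h3 := h1.symm.trans h2
    linear_combination (1 / (q:ℂ)) * h3
  have hφPn : ∀ (n : ℕ), ∀ z ∈ basin ω, φ ((Pq ω)^[n] z) = n / (q : ℂ) + φ z := by
    intro n z hz
    induction n with
    | zero => simp
    | succ n ih =>
      rw [Function.iterate_succ_apply', hφP _ (basin_fwd_iter ω z n hz), ih]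
      push_cast; ring
  have hφf : ∀ (n : ℕ), ∀ z ∈ basin ω, φ (f^[n] z) = n + φ z := by
    intro n z hz
    rw [hfit, hφPn _ z hz]
    push_cast
    field_simp
  refine ⟨φ, fun z hz => (hφd z hz).differentiableAt, ?_, hφP, ?_⟩
  · intro w
    have hψV : ∀ z ∈ V, deriv ψ z = deriv ψ0 z := by
      intro z hz
      have := (hψd z 0 hz).deriv
      simpa [Function.iterate_zero] using this
    obtain ⟨n, x, hx, hxn⟩ := halfplane_surj (φ ∘ σ) F R
      (fun x hx => ((hφd _ (hVb _ (hσ x hx).1)).differentiableAt.comp x (hσ x hx).2.1))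
      (fun x hx => by
        obtain ⟨s1, s2, s3, _⟩ := hσ x hx
        rw [deriv_comp x (hψ0 _ s1).1 s2] at s3
        rw [deriv_comp x (hφd _ (hVb _ s1)).differentiableAt s2, (hφd _ (hVb _ s1)).deriv, hψV _ s1]
        exact s3)
      (fun x hx => (hσ x hx).2.2.2.1)
      (fun x hx => by
        obtain ⟨s1, _, _, _, s5⟩ := hσ x hx
        have := hφf 1 _ (hVb _ s1)
        simp only [Function.comp, s5]
        simp only [Function.iterate_one, Nat.cast_one] at this
        rw [this, add_comm]) w
    obtain ⟨z, hz⟩ := (Pq_surj ω).iterate (q * n) (σ x)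
    have hzb : z ∈ basin ω := basin_bwd_iter ω (q * n) z (by rw [hz]; exact hVb _ (hσ x hx).1)
    refine ⟨z, hzb, ?_⟩
    have := hφf n z hzb
    rw [hfit, hz] at this
    have h8 : φ (σ x) = w + n := hxn
    linear_combination h8 - this
  · intro z hz
    rw [(hφd z hz).deriv]
    have hcrit : ∀ N, f^[N] z ∈ V → (deriv ψ z = 0 ↔ ∃ k < q * N, (Pq ω)^[k] z = -ω / 2) := by
      intro N hN
      rw [(hψd z N hN).deriv, mul_eq_zero, or_iff_right (hψ0 _ hN).2.1, hfit, Pq_iter_deriv]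
    obtain ⟨N, hN⟩ := hB z hz
    constructor
    · intro h
      obtain ⟨k, _, hk⟩ := (hcrit N hN).1 h
      exact ⟨k, hk⟩
    · rintro ⟨k, hk⟩
      have h1 := (hVmono z N (N + k + 1) (by omega) hN).1
      refine (hcrit _ h1).2 ⟨k, ?_, hk⟩
      have : N + k + 1 ≤ q * (N + k + 1) := Nat.le_mul_of_pos_left _ (Nat.pos_of_ne_zero hq)
      omega

/-- There exists an extended Fatou coordinate `φ` for `P_ω`:
holomorphic on `Λ_ω`, surjective onto `ℂ`, satisfying `φ(P_ω z) = 1/q + φ z`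
(hence `φ(P_ω^[q] z) = 1 + φ z`), normalized by `φ(-ω/2) = 0`, and whose
critical points are exactly the backward orbit of the critical point `-ω/2`. -/
theorem extended_fatou_coordinate_exists
    (p q : ℕ) (hq : 2 ≤ q) (hp0 : 0 < p) (hpq : p < q) (hcop : Nat.Coprime p q)
    (ω : ℂ) (hω : ω = Complex.exp (2 * Real.pi * Complex.I * (p : ℂ) / (q : ℂ))) :
    ∃ φ : ℂ → ℂ,
      (∀ z ∈ basin ω, DifferentiableAt ℂ φ z) ∧
      (∀ w : ℂ, ∃ z ∈ basin ω, φ z = w) ∧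
      (∀ z ∈ basin ω, φ (Pq ω z) = 1 / (q : ℂ) + φ z) ∧
      (∀ z ∈ basin ω, φ ((Pq ω)^[q] z) = 1 + φ z) ∧
      φ (-ω / 2) = 0 ∧
      (∀ z ∈ basin ω, (deriv φ z = 0 ↔ ∃ n : ℕ, (Pq ω)^[n] z = -ω / 2)) := by
  have hqne : q ≠ 0 := by omega
  have hq' : (q : ℂ) ≠ 0 := by exact_mod_cast hqne
  have hωq : ω ^ q = 1 := by
    rw [hω, ← Complex.exp_nat_mul, Complex.exp_eq_one_iff]
    refine ⟨p, ?_⟩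
    field_simp
    simp
  obtain ⟨φ, h1, h2, h3, h4⟩ := main_aux q hqne ω hωq
  have h5 : ∀ (n : ℕ), ∀ z ∈ basin ω, φ ((Pq ω)^[n] z) = n / (q : ℂ) + φ z := by
    intro n z hz
    induction n with
    | zero => simp
    | succ n ih =>
      rw [Function.iterate_succ_apply', h3 _ (basin_fwd_iter ω z n hz), ih]
      push_cast; ring
  refine ⟨fun z => φ z - φ (-ω / 2), fun z hz => (h1 z hz).sub_const _, fun w => ?_, fun z hz => ?_,
    fun z hz => ?_, sub_self _, fun z hz => ?_⟩
  · obtain ⟨z, hz, hw⟩ := h2 (w + φ (-ω / 2))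
    exact ⟨z, hz, by simp only [hw]; ring⟩
  · simp only [h3 z hz]; ring
  · simp only [h5 q z hz, div_self hq']; ring
  · rw [deriv_sub_const]
    exact h4 z hz
end

section
/- The critical point −ω/2 of P_ω lies in the parabolic basin Λ_ω; that is, the critical orbit converges to the parabolic fixed point, P_ω^n(−ω/2) → 0 as n → ∞, and no iterate of the critical point equals 0, i.e. P_ω^n(−ω/2) ≠ 0 for all n ≥ 0. -/
open Complex Filter Topology Set

lemma exists_sqrt_ball {c : ℂ} {r : ℝ} {G : ℂ → ℂ} (hr : 0 < r)
    (hG : DifferentiableOn ℂ G (Metric.ball c r)) (h0 : ∀ w ∈ Metric.ball c r, G w ≠ 0) :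
    ∃ s : ℂ → ℂ, DifferentiableOn ℂ s (Metric.ball c r) ∧
      ∀ w ∈ Metric.ball c r, s w ^ 2 = G w := by
  have hd : DifferentiableOn ℂ (deriv G) (Metric.ball c r) := hG.deriv Metric.isOpen_ball
  have hq : DifferentiableOn ℂ (fun w => deriv G w / G w) (Metric.ball c r) := hd.div hG h0
  have hc : c ∈ Metric.ball c r := Metric.mem_ball_self hr
  obtain ⟨L, hL0, hL⟩ := (hq.isExactOn_ball).with_val_at c (Complex.log (G c))
  have hLd : DifferentiableOn ℂ L (Metric.ball c r) :=
    fun w hw => (hL w hw).differentiableAt.differentiableWithinAt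
  have key : ∀ w ∈ Metric.ball c r, G w * exp (-L w) = 1 := by
    intro w hw
    have hder : ∀ x ∈ Metric.ball c r, HasDerivAt (fun w => G w * exp (-L w)) 0 x := by
      intro x hx
      have h1 : HasDerivAt G (deriv G x) x :=
        (hG.differentiableAt (Metric.isOpen_ball.mem_nhds hx)).hasDerivAt
      have h2 := h1.mul ((hL x hx).neg.cexp)
      refine h2.congr_deriv ?_
      have := h0 x hx
      field_simp
      ring
    have := (convex_ball c r).is_const_of_fderivWithin_eq_zero (𝕜 := ℂ)
      (f := fun w => G w * exp (-L w))
      (fun x hx => (hder x hx).differentiableAt.differentiableWithinAt) ?_ hw hc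
    · rw [this, hL0, Complex.exp_neg, Complex.exp_log (h0 c hc)]
      exact mul_inv_cancel₀ (h0 c hc)
    · intro x hx
      rw [fderivWithin_of_isOpen Metric.isOpen_ball hx]
      ext
      simp [(hder x hx).deriv]
  refine ⟨fun w => exp (L w / 2), (hLd.div_const 2).cexp, fun w hw => ?_⟩
  rw [← Complex.exp_nat_mul]
  have := key w hw
  rw [Complex.exp_neg] at this
  have h3 := Complex.exp_ne_zero (L w)
  field_simp at this
  rw [this]
  congr 1
  push_cast
  ring

lemma exists_lift {ω c : ℂ} {r : ℝ} (hr : 0 < r) {z : ℂ → ℂ}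
    (hz : DifferentiableOn ℂ z (Metric.ball c r))
    (hv : ∀ k : ℕ, ∀ w ∈ Metric.ball c r, (Pq ω)^[k] (-ω ^ 2 / 4) ≠ z w)
    {S : Set ℂ} (hS : IsPreconnected S) {φ : ℂ → ℂ} (hφ : ContinuousOn φ S)
    (hφB : MapsTo φ S (Metric.ball c r)) (N : ℕ) :
    ∀ ψ : ℂ → ℂ, ContinuousOn ψ S → (∀ s ∈ S, (Pq ω)^[N] (ψ s) = z (φ s)) →
    ∃ G : ℂ → ℂ, DifferentiableOn ℂ G (Metric.ball c r) ∧
      (∀ w ∈ Metric.ball c r, (Pq ω)^[N] (G w) = z w) ∧ ∀ s ∈ S, G (φ s) = ψ s := by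
  induction N with
  | zero =>
    intro ψ _ h
    exact ⟨z, hz, fun w _ => rfl, fun s hs => (h s hs).symm⟩
  | succ N ih =>
    intro ψ hψ h
    have hPc : Continuous (Pq ω) := by unfold Pq; fun_prop
    obtain ⟨G, hG, hG1, hG2⟩ := ih (fun s => Pq ω (ψ s)) (hPc.comp_continuousOn hψ)
      (fun s hs => by rw [← h s hs, Function.iterate_succ_apply])
    have hne : ∀ w ∈ Metric.ball c r, G w - (-ω ^ 2 / 4) ≠ 0 := by
      intro w hw h0
      apply hv N w hw
      rw [← hG1 w hw, sub_eq_zero.mp h0]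
    obtain ⟨σ, hσ, hσ2⟩ := exists_sqrt_ball hr (hG.sub_const _) hne
    have hsq : EqOn ((fun s => ψ s + ω / 2) ^ 2) ((fun s => σ (φ s)) ^ 2) S := by
      intro s hs
      simp only [Pi.pow_apply]
      rw [hσ2 _ (hφB hs), hG2 s hs]
      simp only [Pq]
      ring
    have hor := hS.eq_or_eq_neg_of_sq_eq (hψ.add continuousOn_const)
      (hσ.continuousOn.comp hφ hφB) hsq (by
        intro s hs h0
        apply hne _ (hφB hs)
        rw [← hσ2 _ (hφB hs)]
        have h0' : σ (φ s) = 0 := h0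
        rw [h0']; ring)
    have fin : ∀ τ : ℂ → ℂ, DifferentiableOn ℂ τ (Metric.ball c r) →
        (∀ w ∈ Metric.ball c r, τ w ^ 2 = G w - (-ω ^ 2 / 4)) →
        (∀ s ∈ S, ψ s + ω / 2 = τ (φ s)) → ∃ G : ℂ → ℂ, DifferentiableOn ℂ G (Metric.ball c r) ∧
      (∀ w ∈ Metric.ball c r, (Pq ω)^[N+1] (G w) = z w) ∧ ∀ s ∈ S, G (φ s) = ψ s := by
      intro τ h1 h2 h3
      refine ⟨fun w => τ w - ω / 2, h1.sub_const _, fun w hw => ?_, fun s hs => ?_⟩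
      · rw [Function.iterate_succ_apply, ← hG1 w hw]
        congr 1
        have := h2 w hw
        simp only [Pq]
        linear_combination this
      · have := h3 s hs
        simp only []
        linear_combination -this
    rcases hor with hor | hor
    · exact fin σ hσ hσ2 hor
    · exact fin (fun w => - σ w) hσ.neg (fun w hw => by rw [← hσ2 w hw]; ring) hor

lemma decomp {ω : ℂ} {q : ℕ} (hq : 2 ≤ q) (hω : ω ^ q = 1) :
    ∃ (m : ℕ) (g : ℂ → ℂ), 0 < m ∧ Differentiable ℂ g ∧ g 0 ≠ 0 ∧
      ∀ z, (Pq ω)^[q] z = z + z ^ (m + 1) * g z := by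
  set A : Polynomial ℂ := Polynomial.C ω * Polynomial.X + Polynomial.X ^ 2 with hA
  have hAe : (fun x => A.eval x) = Pq ω := by
    ext x; simp [hA, Pq]
  have hAd : A.natDegree = 2 := by
    rw [hA]; compute_degree!
  set Q : Polynomial ℂ := A.comp^[q] Polynomial.X - Polynomial.X with hQ
  have hQe : ∀ z, Q.eval z = (Pq ω)^[q] z - z := by
    intro z
    rw [hQ, Polynomial.eval_sub, Polynomial.iterate_comp_eval, hAe]; simp
  have hQ0 : Q ≠ 0 := by
    intro h
    have h1 : A.comp^[q] Polynomial.X = Polynomial.X := sub_eq_zero.mp h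
    have h2 := congrArg Polynomial.natDegree h1
    rw [Polynomial.natDegree_iterate_comp, hAd, Polynomial.natDegree_X, mul_one] at h2
    have : q ≠ 0 := by omega
    have := Nat.one_lt_two_pow this
    omega
  have hP0 : Pq ω 0 = 0 := by simp [Pq]
  have hder : HasDerivAt (Pq ω) ω 0 := by
    have := ((hasDerivAt_id (0:ℂ)).const_mul ω).add ((hasDerivAt_id (0:ℂ)).pow 2)
    exact this.congr_deriv (by simp)
  have hit := HasDerivAt.iterate 0 hder hP0 q
  have hQd : Q.derivative.eval 0 = 0 := by
    have h1 := Q.hasDerivAt 0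
    have h2 : HasDerivAt (fun x => Q.eval x) (ω ^ q - 1) 0 := by
      have := hit.sub (hasDerivAt_id (0:ℂ))
      have e : (fun x => Q.eval x) = (Pq ω)^[q] - id := by
        funext x; exact hQe x
      rw [e]; exact this
    rw [h1.unique h2, hω, sub_self]
  have hroot : Q.eval 0 = 0 := by
    rw [hQe, Function.iterate_fixed hP0, sub_self]
  have hmul := (Polynomial.one_lt_rootMultiplicity_iff_isRoot hQ0).2 ⟨hroot, hQd⟩
  obtain ⟨g, hg, hnd⟩ := Q.exists_eq_pow_rootMultiplicity_mul_and_not_dvd hQ0 0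
  obtain ⟨m, hm⟩ : ∃ m, Q.rootMultiplicity 0 = m + 1 := ⟨Q.rootMultiplicity 0 - 1, by omega⟩
  refine ⟨m, fun z => g.eval z, by omega, g.differentiable, ?_, fun z => ?_⟩
  · intro h; exact hnd (Polynomial.dvd_iff_isRoot.2 h)
  · have h1 := hQe z
    rw [hg, hm] at h1
    simp at h1
    rw [h1]; ring


lemma petal {m : ℕ} {f g : ℂ → ℂ} (hm : 0 < m) (hg : Differentiable ℂ g) (hg0 : g 0 ≠ 0)
    (hf : ∀ z, f z = z + z ^ (m + 1) * g z) :
    ∃ (R : ℝ) (ζ F : ℂ → ℂ), 0 < R ∧ DifferentiableOn ℂ ζ {w | R < w.re} ∧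
      ContinuousOn F {w | R < w.re} ∧ Tendsto ζ (comap re atTop) (𝓝 0) ∧
      ∀ w : ℂ, R < w.re → ‖F w - (w + 1)‖ ≤ 1 / 10 ∧ f (ζ w) = ζ (F w) ∧ ‖ζ w‖ ≤ 2 ∧ ζ w ≠ 0 ∧
        ∀ w' : ℂ, R < w'.re → ζ w = ζ w' → w = w' := by
  have hmC : (m : ℂ) ≠ 0 := by exact_mod_cast hm.ne'
  have hmR : (0:ℝ) < m := by exact_mod_cast hm
  obtain ⟨b, hb⟩ : ∃ b : ℂ, b ^ m = -1 / (m * g 0) :=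
    IsAlgClosed.exists_pow_nat_eq _ hm
  have hb0 : b ≠ 0 := by
    rintro rfl
    rw [zero_pow hm.ne'] at hb
    have : (-1 : ℂ) / (m * g 0) ≠ 0 := div_ne_zero (by norm_num) (mul_ne_zero hmC hg0)
    exact this hb.symm
  set l : Filter ℂ := comap re atTop with hl
  set ζ : ℂ → ℂ := fun w => b * exp (-log w / m) with hζ
  have hre : Tendsto re l atTop := tendsto_comap
  have hζ0 : Tendsto ζ l (𝓝 0) := by
    have h1 : Tendsto (fun w : ℂ => ‖w‖) l atTop :=
      tendsto_atTop_mono (fun w => re_le_norm w) hre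
    have h2 : Tendsto (fun w : ℂ => Real.exp (-(Real.log ‖w‖ / m))) l (𝓝 0) :=
      Real.tendsto_exp_neg_atTop_nhds_zero.comp
        ((Real.tendsto_log_atTop.comp h1).atTop_div_const hmR)
    rw [tendsto_zero_iff_norm_tendsto_zero]
    have h3 := h2.const_mul ‖b‖
    rw [mul_zero] at h3
    refine h3.congr fun w => ?_
    rw [hζ]
    simp only [norm_mul, Complex.norm_exp]
    congr 2
    have : -log w / (m:ℂ) = ((-1 / m : ℝ) : ℂ) * log w := by push_cast; ring
    rw [this, Complex.re_ofReal_mul, Complex.log_re]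
    ring
  have hζm : ∀ w : ℂ, w ≠ 0 → ζ w ^ m = b ^ m * w⁻¹ := by
    intro w hw
    rw [hζ]
    simp only [mul_pow]
    rw [← Complex.exp_nat_mul, mul_div_cancel₀ _ hmC, Complex.exp_neg, Complex.exp_log hw]
  set u : ℂ → ℂ := fun w => ζ w ^ m * g (ζ w) with hu
  have hgζ : Tendsto (fun w => g (ζ w)) l (𝓝 (g 0)) := (hg.continuous.tendsto 0).comp hζ0
  have hu0 : Tendsto u l (𝓝 0) := by
    have := (hζ0.pow m).mul hgζ
    rwa [zero_pow hm.ne', zero_mul] at this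
  set F : ℂ → ℂ := fun w => w * ((1 + u w) ^ m)⁻¹ with hF
  set k : ℂ → ℂ := fun x => ((1 + x) ^ m)⁻¹ with hk
  have hkd : HasDerivAt k (-m) 0 := by
    have h1 : HasDerivAt (fun x : ℂ => (1 + x) ^ m) (m * (1 + 0) ^ (m - 1) * 1) 0 :=
      ((hasDerivAt_id (0:ℂ)).const_add 1).pow m
    have h2 := h1.inv (by simp)
    exact h2.congr_deriv (by simp)
  have hκ : Tendsto (dslope k 0) (𝓝 0) (𝓝 (-m)) := by
    have := (continuousAt_dslope_same.2 hkd.differentiableAt).tendsto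
    rwa [dslope_same, hkd.deriv] at this
  have hlim : Tendsto (fun w => b ^ m * g (ζ w) * dslope k 0 (u w)) l (𝓝 1) := by
    have := (hgζ.const_mul (b ^ m)).mul (hκ.comp hu0)
    have e : b ^ m * g 0 * -(m : ℂ) = 1 := by
      rw [hb]; field_simp
    rwa [e] at this
  have hFeq : ∀ w : ℂ, w ≠ 0 → F w - w = b ^ m * g (ζ w) * dslope k 0 (u w) := by
    intro w hw
    have h1 := sub_smul_dslope k 0 (u w)
    have h2 : w * u w = b ^ m * g (ζ w) := by
      rw [hu]; simp only []
      rw [hζm w hw]; field_simp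
    rw [← h2, mul_assoc]
    rw [sub_zero, smul_eq_mul] at h1
    rw [h1, hF, hk]
    simp
    ring
  have hpos : ∀ᶠ w : ℂ in l, 0 < w.re := hre.eventually_gt_atTop 0
  have hFl : ∀ᶠ w in l, ‖F w - (w + 1)‖ ≤ 1 / 10 := by
    filter_upwards [hpos, hlim.eventually (Metric.closedBall_mem_nhds (1:ℂ) (show (0:ℝ) < 1/10 by norm_num))] with w hw h
    have hw0 : w ≠ 0 := by rintro rfl; simp at hw
    rw [← hFeq w hw0, dist_eq_norm] at h
    rwa [← sub_sub]
  have hlog : ∀ᶠ w in l, ‖(m:ℂ) * log (1 + u w)‖ < Real.pi / 2 := by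
    have h1 : Tendsto (fun w => ‖(m:ℂ) * log (1 + u w)‖) l (𝓝 0) := by
      have h2 : ContinuousAt (fun x : ℂ => ‖(m:ℂ) * log (1 + x)‖) 0 := by
        have : ContinuousAt (fun x : ℂ => log (1 + x)) 0 :=
          (continuousAt_const.add continuousAt_id).clog (by simp)
        exact (continuousAt_const.mul this).norm
      have h3 := h2.tendsto.comp hu0
      simpa [Function.comp_def] using h3
    exact h1.eventually (gt_mem_nhds (by positivity))
  have hu1 : ∀ᶠ w in l, 1 + u w ≠ 0 := by
    have h1 : Tendsto (fun w => 1 + u w) l (𝓝 1) := by simpa using hu0.const_add 1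
    exact h1.eventually_ne one_ne_zero
  have hζ2 : ∀ᶠ w in l, ‖ζ w‖ ≤ 2 := by
    have := hζ0.norm
    rw [norm_zero] at this
    exact this.eventually (ge_mem_nhds (by norm_num))
  have hall := hFl.and (hlog.and (hu1.and hζ2))
  rw [hl, eventually_comap] at hall
  obtain ⟨R₀, hR₀⟩ := eventually_atTop.1 hall
  have hslit : ∀ w : ℂ, max R₀ 1 < w.re → w ∈ slitPlane := fun w hw =>
    Or.inl (by linarith [le_max_right R₀ 1])
  have hζd : DifferentiableOn ℂ ζ {w | max R₀ 1 < w.re} := by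
    intro w hw
    have h1 : DifferentiableAt ℂ log w := differentiableAt_log (hslit w hw)
    exact (((h1.neg.div_const _).cexp).const_mul b).differentiableWithinAt
  refine ⟨max R₀ 1, ζ, F, by positivity, hζd, ?_, hζ0, ?_⟩
  · have h1 : ContinuousOn (fun w => (1 + u w) ^ m) {w | max R₀ 1 < w.re} :=
      (continuousOn_const.add ((hζd.continuousOn.pow m).mul
        (hg.continuous.comp_continuousOn hζd.continuousOn))).pow m
    refine continuousOn_id.mul (h1.inv₀ fun w hw => ?_)
    have hw' : R₀ ≤ w.re := (le_max_left _ _).trans (le_of_lt hw)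
    exact pow_ne_zero _ (hR₀ _ hw' w rfl).2.2.1
  · intro w hw
    have hw' : R₀ ≤ w.re := (le_max_left _ _).trans (le_of_lt hw)
    have hw1 : 1 < w.re := (le_max_right _ _).trans_lt hw
    have hw0 : w ≠ 0 := by rintro rfl; simp at hw1; linarith
    obtain ⟨c1, c2, c3, c4⟩ := hR₀ _ hw' w rfl
    refine ⟨c1, ?_, c4, mul_ne_zero hb0 (exp_ne_zero _), ?_⟩
    · have hexp : F w = exp (log w - m * log (1 + u w)) := by
        rw [Complex.exp_sub, Complex.exp_log hw0, Complex.exp_nat_mul, Complex.exp_log c3, hF]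
        rfl
      have him1 : |(log w).im| < Real.pi / 2 := by
        rw [Complex.log_im]; exact abs_arg_lt_pi_div_two_iff.2 (Or.inl (by linarith))
      have him2 := (abs_im_le_norm ((m:ℂ) * log (1 + u w))).trans_lt c2
      rw [abs_lt] at him1 him2
      have hlogF : log (F w) = log w - m * log (1 + u w) := by
        rw [hexp]
        apply Complex.log_exp
        · rw [sub_im]; linarith
        · rw [sub_im]; linarith
      have : ζ (F w) = ζ w * (1 + u w) := by
        simp only [hζ]
        rw [hlogF]
        have : -(log w - m * log (1 + u w)) / (m:ℂ) = -log w / m + log (1 + u w) := by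
          field_simp; ring
        rw [this, Complex.exp_add, Complex.exp_log c3]; ring
      rw [this, hf, hu]
      ring
    · intro w' hw2 he
      have hw3 : 1 < w'.re := (le_max_right _ _).trans_lt hw2
      have hw0' : w' ≠ 0 := by rintro rfl; simp at hw3; linarith
      have h1 := hζm w hw0
      rw [he, hζm w' hw0'] at h1
      have := mul_left_cancel₀ (pow_ne_zero m hb0) h1
      exact (inv_injective this).symm

lemma bounded_of_iterate {ω : ℂ} (hω : ‖ω‖ = 1) (n : ℕ) :
    ∀ y : ℂ, ‖(Pq ω)^[n] y‖ ≤ 2 → ‖y‖ ≤ 2 := by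
  induction n with
  | zero => intro y h; exact h
  | succ n ih =>
    intro y h
    rw [Function.iterate_succ_apply] at h
    have h1 := ih _ h
    by_contra! hy
    have h2 : ‖y‖ * (‖y‖ - 1) ≤ ‖Pq ω y‖ := by
      have e : Pq ω y = y * (y + ω) := by simp only [Pq]; ring
      rw [e, norm_mul]
      have h3 := norm_sub_norm_le y (-ω)
      rw [norm_neg, hω, sub_neg_eq_add] at h3
      gcongr
    nlinarith

/-- The critical point `-ω/2` of `P_ω` lies in the parabolic
basin `Λ_ω`: its orbit converges to the parabolic fixed point `0`, and no
iterate of the critical point equals `0`. -/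
theorem critical_point_in_basin
    (p q : ℕ) (hq : 2 ≤ q) (hp0 : 0 < p) (hpq : p < q) (hcop : Nat.Coprime p q)
    (ω : ℂ) (hω : ω = Complex.exp (2 * Real.pi * Complex.I * (p : ℂ) / (q : ℂ))) :
    Tendsto (fun n => (Pq ω)^[n] (-ω / 2)) atTop (𝓝 0) ∧
    (∀ n : ℕ, (Pq ω)^[n] (-ω / 2) ≠ 0) := by
  have hqC : (q : ℂ) ≠ 0 := by
    have : q ≠ 0 := by omega
    exact_mod_cast this
  have hωq : ω ^ q = 1 := by
    rw [hω, ← Complex.exp_nat_mul, mul_div_cancel₀ _ hqC, Complex.exp_eq_one_iff]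
    exact ⟨p, by push_cast; ring⟩
  have hωn : ‖ω‖ = 1 := by
    have := congrArg norm hωq
    rw [norm_pow, norm_one] at this
    exact (pow_eq_one_iff_of_nonneg (norm_nonneg _) (by omega)).1 this
  have hPc : Continuous (Pq ω) := by unfold Pq; fun_prop
  have hP0 : Pq ω 0 = 0 := by simp [Pq]
  obtain ⟨m, g, hm, hg, hg0, hf⟩ := decomp hq hωq
  obtain ⟨R, ζ, F, hR, hζd, hFc, hζ0, hpet⟩ := petal hm hg hg0 hf
  have hstep : ∀ w : ℂ, R < w.re → w.re + 9 / 10 ≤ (F w).re := by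
    intro w hw
    have h1 := (abs_re_le_norm _).trans (hpet w hw).1
    rw [abs_le] at h1
    simp at h1
    linarith [h1.1]
  have hiter : ∀ n : ℕ, ∀ w : ℂ, R < w.re →
      ‖F^[n] w - (w + n)‖ ≤ n / 10 ∧ w.re + 9 / 10 * n ≤ (F^[n] w).re ∧
      (Pq ω)^[q * n] (ζ w) = ζ (F^[n] w) := by
    intro n
    induction n with
    | zero => intro w _; simp
    | succ n ih =>
      intro w hw
      obtain ⟨h1, h2, h3⟩ := ih w hw
      have hw' : R < (F^[n] w).re := by
        have : (0:ℝ) ≤ n := Nat.cast_nonneg n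
        linarith
      obtain ⟨k1, k2, -⟩ := hpet _ hw'
      have k3 := hstep _ hw'
      rw [Function.iterate_succ_apply']
      refine ⟨?_, ?_, ?_⟩
      · have e : F (F^[n] w) - (w + ((n + 1 : ℕ) : ℂ)) =
          (F (F^[n] w) - (F^[n] w + 1)) + (F^[n] w - (w + n)) := by push_cast; ring
        rw [e]
        refine (norm_add_le _ _).trans ?_
        push_cast
        linarith
      · push_cast; linarith
      · rw [show q * (n + 1) = q + q * n by ring, Function.iterate_add_apply, h3, k2]
  have hFiterc : ∀ n : ℕ, ContinuousOn (F^[n]) {w | R < w.re} := by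
    intro n
    refine ContinuousOn.iterate hFc ?_ n
    intro w hw
    have := hstep w hw
    simp only [mem_ofPred_eq] at hw ⊢
    linarith
  have hclaim : ∃ (k : ℕ) (w : ℂ), R < w.re ∧ (Pq ω)^[k] (-ω ^ 2 / 4) = ζ w := by
    by_contra! hno
    set w0 : ℂ := ((R + 3 : ℝ) : ℂ) with hw0
    have hw0re : w0.re = R + 3 := by simp [hw0]
    have hw0H : R < w0.re := by rw [hw0re]; linarith
    have hSH : ∀ s ∈ Metric.ball w0 2, R < s.re := by
      intro s hs
      rw [Metric.mem_ball, dist_eq_norm] at hs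
      have h1 := (abs_re_le_norm _).trans_lt hs
      rw [abs_lt, sub_re] at h1
      linarith [h1.1]
    have hF0 : ‖F w0 - w0‖ ≤ 11 / 10 := by
      have h1 := (hpet w0 hw0H).1
      have e : F w0 - w0 = (F w0 - (w0 + 1)) + 1 := by ring
      rw [e]
      refine (norm_add_le _ _).trans ?_
      rw [norm_one]; linarith
    have hF0S : F w0 ∈ Metric.ball w0 2 := by
      rw [Metric.mem_ball, dist_eq_norm]; linarith
    have hbound : ∀ n : ℕ, 3 ≤ n → dist (ζ (F w0)) (ζ w0) * n ≤ 5 := by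
      intro n hn
      have hnR : (3:ℝ) ≤ n := by exact_mod_cast hn
      obtain ⟨i1, i2, i3⟩ := hiter n w0 hw0H
      set c := F^[n] w0 with hc
      have hr : (0:ℝ) < 9 / 10 * n := by positivity
      have hBH : ∀ w ∈ Metric.ball c (9 / 10 * n), R < w.re := by
        intro w hw
        rw [Metric.mem_ball, dist_eq_norm] at hw
        have h1 := (abs_re_le_norm _).trans_lt hw
        rw [abs_lt, sub_re] at h1
        linarith [h1.1]
      have hmaps : MapsTo (F^[n]) (Metric.ball w0 2) (Metric.ball c (9 / 10 * n)) := by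
        intro s hs
        obtain ⟨j1, -, -⟩ := hiter n s (hSH s hs)
        rw [Metric.mem_ball, dist_eq_norm] at hs ⊢
        have e : F^[n] s - c = (F^[n] s - (s + n)) - (c - (w0 + n)) + (s - w0) := by ring
        rw [e]
        refine (norm_add_le _ _).trans_lt ?_
        have := norm_sub_le (F^[n] s - (s + n)) (c - (w0 + n))
        linarith
      obtain ⟨G, hG, hG1, hG2⟩ := exists_lift (ω := ω) hr (hζd.mono hBH)
        (fun k w hw => hno k w (hBH w hw)) (convex_ball w0 2).isPreconnected
        ((hFiterc n).mono hSH) hmaps (q * n) ζ (hζd.continuousOn.mono hSH)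
        (fun s hs => (hiter n s (hSH s hs)).2.2)
      have hGb : ∀ w ∈ Metric.ball c (9 / 10 * n), ‖G w‖ ≤ 2 := by
        intro w hw
        apply bounded_of_iterate hωn (q * n)
        rw [hG1 w hw]
        exact (hpet w (hBH w hw)).2.2.1
      have hcH : R < c.re := by linarith
      have hFc1 : F^[n] (F w0) = F c := by
        rw [hc, ← Function.iterate_succ_apply, Function.iterate_succ_apply']
      have hd : dist (F c) c ≤ 11 / 10 := by
        have h1 := (hpet c hcH).1
        have e : F c - c = (F c - (c + 1)) + 1 := by ring
        rw [dist_eq_norm, e]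
        refine (norm_add_le _ _).trans ?_
        rw [norm_one]; linarith
      have hs := Complex.dist_le_div_mul_dist_of_mapsTo_ball (R₂ := 4) (z := F c) hG
        (by
          intro w hw
          rw [Metric.mem_closedBall, dist_eq_norm]
          have h1 := hGb w hw
          have h2 := hGb c (Metric.mem_ball_self hr)
          linarith [norm_sub_le (G w) (G c)])
        (by rw [Metric.mem_ball]; linarith)
      rw [← hFc1, hG2 _ hF0S, hc, hG2 _ (Metric.mem_ball_self (by norm_num)), hFc1] at hs
      have h5 : dist (ζ (F w0)) (ζ w0) ≤ 4 / (9 / 10 * n) * (11 / 10) :=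
        hs.trans (by gcongr)
      calc dist (ζ (F w0)) (ζ w0) * n ≤ 4 / (9 / 10 * n) * (11 / 10) * n := by gcongr
        _ = 44 / 9 := by field_simp; norm_num
        _ ≤ 5 := by norm_num
    have hz : dist (ζ (F w0)) (ζ w0) = 0 := by
      by_contra hne
      have hpos : 0 < dist (ζ (F w0)) (ζ w0) := lt_of_le_of_ne dist_nonneg (Ne.symm hne)
      obtain ⟨n, hn⟩ := exists_nat_gt (5 / dist (ζ (F w0)) (ζ w0))
      rw [div_lt_iff₀ hpos] at hn
      have h1 := hbound (n + 3) (by omega)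
      push_cast at h1
      nlinarith
    have h1 := (hpet w0 hw0H).2.2.2.2 (F w0) (hSH _ hF0S) (dist_eq_zero.1 hz).symm
    have h2 := hstep w0 hw0H
    rw [← h1] at h2
    linarith
  obtain ⟨k, w, hw, hk⟩ := hclaim
  have hcv : Pq ω (-ω / 2) = -ω ^ 2 / 4 := by simp only [Pq]; ring
  have hk1 : (Pq ω)^[k + 1] (-ω / 2) = ζ w := by
    rw [Function.iterate_succ_apply, hcv, hk]
  have horb : ∀ n : ℕ, (Pq ω)^[q * n + (k + 1)] (-ω / 2) = ζ (F^[n] w) := by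
    intro n
    rw [Function.iterate_add_apply, hk1, (hiter n w hw).2.2]
  constructor
  · have hlim : Tendsto (fun n => ζ (F^[n] w)) atTop (𝓝 0) := by
      refine hζ0.comp (tendsto_comap_iff.2 ?_)
      refine tendsto_atTop_mono (fun n => (hiter n w hw).2.1) ?_
      exact tendsto_atTop_add_const_left _ _
        (tendsto_natCast_atTop_atTop.const_mul_atTop (by norm_num))
    have hj : ∀ j : ℕ, Tendsto (fun n => (Pq ω)^[j] (ζ (F^[n] w))) atTop (𝓝 0) := by
      intro j
      have := ((hPc.iterate j).tendsto 0).comp hlim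
      rwa [Function.iterate_fixed hP0] at this
    rw [Metric.tendsto_atTop]
    intro ε hε
    have hev : ∀ᶠ n in atTop, ∀ j ∈ Finset.range q,
        dist ((Pq ω)^[j] (ζ (F^[n] w))) 0 < ε := by
      rw [Filter.eventually_all_finset]
      intro j _
      exact (hj j).eventually (Metric.ball_mem_nhds 0 hε)
    obtain ⟨M, hM⟩ := eventually_atTop.1 hev
    refine ⟨q * M + (k + 1), fun n hn => ?_⟩
    have hqpos : 0 < q := by omega
    obtain ⟨t, rfl⟩ : ∃ t, n = t + (k + 1) := ⟨n - (k + 1), by omega⟩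
    have ht : M ≤ t / q := by
      rw [Nat.le_div_iff_mul_le hqpos, mul_comm]; omega
    have h1 := hM (t / q) ht (t % q) (Finset.mem_range.2 (Nat.mod_lt _ hqpos))
    rw [← horb, ← Function.iterate_add_apply, ← add_assoc, Nat.mod_add_div] at h1
    exact h1
  · intro n hn
    have h1 : ∀ i : ℕ, (Pq ω)^[i + n] (-ω / 2) = 0 := by
      intro i
      rw [Function.iterate_add_apply, hn, Function.iterate_fixed hP0]
    have h2 := horb n
    have hq1 : n ≤ q * n + (k + 1) := by nlinarith
    obtain ⟨i, hi⟩ := Nat.exists_eq_add_of_le' hq1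
    rw [hi, h1 i] at h2
    have hwn : R < (F^[n] w).re := by
      have := (hiter n w hw).2.1
      have : (0:ℝ) ≤ n := Nat.cast_nonneg n
      linarith
    exact (hpet _ hwn).2.2.2.1 h2.symm
end

section
/- The parabolic fixed point lies on the boundary of its basin: 0 ∉ Λ_ω but 0 belongs to the closure of Λ_ω, i.e. 0 is in the frontier of the parabolic basin Λ_ω. -/
open Complex Filter Topology Set

lemma petal_s4 (F g : ℂ → ℂ) (m : ℕ) (hm : 1 ≤ m) (hF : ∀ z, F z = z + z ^ (m + 1) * g z)
    (hg : ContinuousAt g 0) (hg0 : g 0 ≠ 0) (ε : ℝ) (hε : 0 < ε) :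
    ∃ z : ℂ, ‖z‖ < ε ∧ Tendsto (fun n => F^[n] z) atTop (𝓝 0) ∧ ∀ n, F^[n] z ≠ 0 := by
  have hm0 : m ≠ 0 := by omega
  obtain ⟨c, hc⟩ : ∃ c : ℂ, c = -(g 0)⁻¹ := ⟨_, rfl⟩
  have hc0 : c ≠ 0 := by rw [hc]; simpa using hg0
  have hcn : 0 < ‖c‖ := norm_pos_iff.2 hc0
  let W : ℂ → ℂ := fun z => c / z ^ m
  let f : ℂ → ℂ := fun u => ((1 + u) ^ m)⁻¹
  have hf : HasDerivAt f (-(m : ℂ)) 0 := by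
    have h1 : HasDerivAt (fun u : ℂ => (1 + u) ^ m) (m : ℂ) 0 := by
      simpa using ((hasDerivAt_id' (0 : ℂ)).const_add 1).fun_pow m
    simpa using h1.fun_inv (by simp)
  have hφ : ContinuousAt (dslope f 0) 0 := continuousAt_dslope_same.2 hf.differentiableAt
  have hφ0 : dslope f 0 0 = -(m : ℂ) := by rw [dslope_same, hf.deriv]
  have hlim : Tendsto (fun z => c * g z * dslope f 0 (z ^ m * g z)) (𝓝 0) (𝓝 (m : ℂ)) := by
    have hu : ContinuousAt (fun z => z ^ m * g z) 0 := (continuousAt_id.pow m).mul hg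
    have h2 : ContinuousAt (fun z => dslope f 0 (z ^ m * g z)) 0 :=
      ContinuousAt.comp (g := dslope f 0) (by simpa [hm0] using hφ) hu
    have h3 : ContinuousAt (fun z => c * g z * dslope f 0 (z ^ m * g z)) 0 :=
      ((continuousAt_const (y := c)).mul hg).mul h2
    have h4 : Tendsto (fun z => c * g z * dslope f 0 (z ^ m * g z)) (𝓝 0)
        (𝓝 (c * g 0 * dslope f 0 (0 ^ m * g 0))) := h3
    rw [zero_pow hm0, zero_mul, hφ0] at h4
    have : c * g 0 * -(m : ℂ) = m := by rw [hc]; field_simp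
    rwa [this] at h4
  obtain ⟨δ, hδ, hδW⟩ := Metric.tendsto_nhds_nhds.1 hlim (1 / 2) (by norm_num)
  have hstep : ∀ z : ℂ, z ≠ 0 → ‖z‖ < δ → (W z).re + 1 / 2 ≤ (W (F z)).re := by
    intro z hz hzδ
    have h1 := hδW (x := z) (by simpa using hzδ)
    have h2 : W (F z) - W z = c * g z * dslope f 0 (z ^ m * g z) := by
      have h3 := sub_smul_dslope f 0 (z ^ m * g z)
      have h4 : W (F z) = c / z ^ m * f (z ^ m * g z) := by
        have : F z = z * (1 + z ^ m * g z) := by rw [hF]; ring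
        simp only [W, f, this, mul_pow, div_eq_mul_inv, mul_inv, mul_assoc]
      have h5 : f 0 = 1 := by simp [f]
      rw [h5, sub_zero, smul_eq_mul] at h3
      have hzm : z ^ m ≠ 0 := pow_ne_zero _ hz
      calc W (F z) - W z = c / z ^ m * (f (z ^ m * g z) - 1) := by rw [h4]; simp only [W]; ring
        _ = _ := by rw [← h3]; field_simp
    rw [← h2, dist_eq_norm] at h1
    have h6 := (Complex.abs_re_le_norm _).trans h1.le
    have h7 := (abs_le.1 h6).1
    simp only [Complex.sub_re, Complex.natCast_re] at h7
    have : (1 : ℝ) ≤ m := by exact_mod_cast hm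
    linarith
  have hsmall : ∀ r > 0, ∀ z : ℂ, ‖c‖ / r ^ m < (W z).re → z ≠ 0 ∧ ‖z‖ < r := by
    intro r hr z hz
    have hpos : 0 < ‖c‖ / r ^ m := by positivity
    have hz0 : z ≠ 0 := by
      rintro rfl
      simp only [W, zero_pow hm0, div_zero, Complex.zero_re] at hz
      linarith
    refine ⟨hz0, ?_⟩
    have h1 := hz.trans_le (Complex.re_le_norm _)
    simp only [W, norm_div, norm_pow] at h1
    have hzn : 0 < ‖z‖ := norm_pos_iff.2 hz0
    have h2 := (div_lt_div_iff_of_pos_left hcn (by positivity) (by positivity)).1 h1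
    exact lt_of_pow_lt_pow_left₀ m hr.le h2
  obtain ⟨R, hR⟩ : ∃ R : ℝ, R = ‖c‖ / δ ^ m + ‖c‖ / ε ^ m + 1 := ⟨_, rfl⟩
  have hp1 : 0 < ‖c‖ / δ ^ m := by positivity
  have hp2 : 0 < ‖c‖ / ε ^ m := by positivity
  have hR0 : 0 < R := by linarith
  obtain ⟨z, hz⟩ := IsAlgClosed.exists_pow_nat_eq (c / (R : ℂ)) (n := m) (by omega)
  have hWz : W z = R := by
    have : (R : ℂ) ≠ 0 := by exact_mod_cast hR0.ne'
    simp only [W, hz]; field_simp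
  have hgrow : ∀ n : ℕ, R + n / 2 ≤ (W (F^[n] z)).re := by
    intro n
    induction n with
    | zero => simp [hWz]
    | succ n ih =>
      have hn : (0 : ℝ) ≤ n := n.cast_nonneg
      have := hsmall δ hδ (F^[n] z) (by linarith)
      have := hstep _ this.1 this.2
      rw [Function.iterate_succ_apply']
      push_cast
      linarith
  refine ⟨z, (hsmall ε hε z ?_).2, ?_, fun n => (hsmall δ hδ _ ?_).1⟩
  · rw [hWz, Complex.ofReal_re]; linarith
  · rw [Metric.tendsto_atTop]
    intro r hr
    obtain ⟨N, hN⟩ := exists_nat_gt (2 * (‖c‖ / r ^ m))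
    refine ⟨N, fun n hn => ?_⟩
    rw [dist_zero_right]
    refine (hsmall r hr _ ?_).2
    have : (N : ℝ) ≤ n := by exact_mod_cast hn
    linarith [hgrow n]
  · have hn : (0 : ℝ) ≤ n := n.cast_nonneg
    linarith [hgrow n]

open Polynomial in
lemma iterate_form (ω : ℂ) (q : ℕ) (hq : 2 ≤ q) (hω : ω ^ q = 1) :
    ∃ (m : ℕ) (g : ℂ → ℂ), 1 ≤ m ∧ Continuous g ∧ g 0 ≠ 0 ∧
      ∀ z, (Pq ω)^[q] z = z + z ^ (m + 1) * g z := by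
  obtain ⟨P, hP⟩ : ∃ P : ℂ[X], P = X ^ 2 + C ω * X := ⟨_, rfl⟩
  have hdeg : P.natDegree = 2 := by rw [hP]; compute_degree!
  have hev : ∀ z, P.eval z = Pq ω z := by intro z; simp [hP, Pq]; ring
  have hQ : ∀ k : ℕ, (∀ z, ((P.comp)^[k] X).eval z = (Pq ω)^[k] z) ∧
      ((P.comp)^[k] X).derivative.eval 0 = ω ^ k ∧ ((P.comp)^[k] X).eval 0 = 0 := by
    intro k
    induction k with
    | zero => simp
    | succ k ih =>
      obtain ⟨h1, h2, h3⟩ := ih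
      refine ⟨fun z => ?_, ?_, ?_⟩
      · rw [Function.iterate_succ_apply', Function.iterate_succ_apply', eval_comp, h1, hev]
      · rw [Function.iterate_succ_apply', derivative_comp, eval_mul, eval_comp, h2, h3, hP]
        simp; ring
      · rw [Function.iterate_succ_apply', eval_comp, h3, hP]; simp
  obtain ⟨h1, h2, h3⟩ := hQ q
  obtain ⟨Q, hQd⟩ : ∃ Q : ℂ[X], Q = (P.comp)^[q] X := ⟨_, rfl⟩
  rw [← hQd] at h1 h2 h3
  have hQdeg : Q.natDegree = 2 ^ q := by
    rw [hQd, natDegree_iterate_comp, hdeg]; simp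
  have hne : Q - X ≠ 0 := by
    intro h
    rw [sub_eq_zero.1 h, natDegree_X] at hQdeg
    have : 2 ^ 2 ≤ 2 ^ q := Nat.pow_le_pow_right (by norm_num) hq
    omega
  have hmul : 1 < (Q - X).rootMultiplicity 0 := by
    rw [one_lt_rootMultiplicity_iff_isRoot hne]
    constructor <;> simp [IsRoot, h2, h3, hω]
  obtain ⟨G, hG, hGd⟩ := exists_eq_pow_rootMultiplicity_mul_and_not_dvd _ hne 0
  refine ⟨(Q - X).rootMultiplicity 0 - 1, fun z => G.eval z, by omega, G.continuous, ?_, ?_⟩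
  · intro h; exact hGd (dvd_iff_isRoot.2 h)
  · intro z
    have := congrArg (eval z) hG
    rw [Nat.sub_add_cancel hmul.le, ← h1]
    simp at this
    rw [← this]; ring

/-- The parabolic fixed point lies on the boundary of its basin:
`0 ∉ Λ_ω` but `0` belongs to the closure of `Λ_ω`, i.e. `0 ∈ frontier Λ_ω`. -/
theorem fixed_point_on_boundary_of_basin
    (p q : ℕ) (hq : 2 ≤ q) (hp0 : 0 < p) (hpq : p < q) (hcop : Nat.Coprime p q)
    (ω : ℂ) (hω : ω = Complex.exp (2 * Real.pi * Complex.I * (p : ℂ) / (q : ℂ))) :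
    (0 : ℂ) ∉ basin ω ∧ (0 : ℂ) ∈ closure (basin ω) ∧ (0 : ℂ) ∈ frontier (basin ω) := by
  have h0 : (0 : ℂ) ∉ basin ω := fun h => h.2 ⟨0, rfl⟩
  have hωq : ω ^ q = 1 := by
    have hq0 : (q : ℂ) ≠ 0 := by exact_mod_cast (by omega : q ≠ 0)
    rw [hω, ← Complex.exp_nat_mul, Complex.exp_eq_one_iff]
    refine ⟨p, ?_⟩
    push_cast
    field_simp
  have hcl : (0 : ℂ) ∈ closure (basin ω) := by
    rw [Metric.mem_closure_iff]
    intro ε hε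
    obtain ⟨m, g, hm, hg, hg0, hF⟩ := iterate_form ω q hq hωq
    obtain ⟨z, hz, hlim, hne⟩ := petal_s4 _ g m hm hF hg.continuousAt hg0 ε hε
    have hfix : ∀ n, (Pq ω)^[n] 0 = 0 := fun n =>
      Function.iterate_fixed (by simp [Pq]) n
    have hcont : Continuous (Pq ω) := by unfold Pq; fun_prop
    refine ⟨z, ⟨?_, ?_⟩, by simpa using hz⟩
    · change Tendsto _ _ _
      intro U hU
      have h1 : ∀ r ∈ Finset.range q, ∀ᶠ n in atTop,
          (Pq ω)^[r] (((Pq ω)^[q])^[n] z) ∈ U := by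
        intro r _
        have h2 := ((hcont.iterate r).tendsto 0).comp hlim
        rw [hfix] at h2
        exact h2 hU
      have h3 := (Filter.eventually_all_finset _).2 h1
      obtain ⟨N, hN⟩ := eventually_atTop.1 h3
      refine mem_map.2 (mem_atTop_sets.2 ⟨N * q, fun n hn => ?_⟩)
      have h4 := hN (n / q) ((Nat.le_div_iff_mul_le (by omega)).2 hn) (n % q)
        (Finset.mem_range.2 (Nat.mod_lt _ (by omega)))
      rw [← Function.iterate_mul, ← Function.iterate_add_apply, Nat.mod_add_div] at h4
      exact h4
    · rintro ⟨n, hn⟩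
      apply hne n
      rw [← Function.iterate_mul]
      have : q * n = (q * n - n) + n := by
        have : n ≤ q * n := Nat.le_mul_of_pos_left n (by omega)
        omega
      rw [this, Function.iterate_add_apply, hn, hfix]
  exact ⟨h0, hcl, hcl, fun h => h0 (interior_subset h)⟩
end

section
/- The critical point of P_ω lies in the immediate parabolic basin: the connected component of Λ_ω containing −ω/2 has the parabolic fixed point 0 in its closure. -/
open Complex Filter Topology Set

theorem sqrt_ball {h : ℂ → ℂ} {c : ℂ} {r : ℝ} (hr : 0 < r)
    (hd : DifferentiableOn ℂ h (Metric.ball c r)) (hn : ∀ w ∈ Metric.ball c r, h w ≠ 0)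
    (s0 : ℂ) (hs0 : s0 ^ 2 = h c) :
    ∃ s : ℂ → ℂ, DifferentiableOn ℂ s (Metric.ball c r) ∧ s c = s0 ∧
      ∀ w ∈ Metric.ball c r, s w ^ 2 = h w := by
  have hc : c ∈ Metric.ball c r := Metric.mem_ball_self hr
  have hs0' : s0 ≠ 0 := by
    intro h0
    apply hn c hc
    rw [← hs0, h0]; simp
  have hq : DifferentiableOn ℂ (fun w => deriv h w / (2 * h w)) (Metric.ball c r) := by
    refine (hd.deriv Metric.isOpen_ball).div (hd.const_mul 2) ?_
    intro w hw
    exact mul_ne_zero two_ne_zero (hn w hw)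
  obtain ⟨L, hLc, hL⟩ := hq.isExactOn_ball.with_val_at c (Complex.log s0)
  have hhd : ∀ w ∈ Metric.ball c r, HasDerivAt h (deriv h w) w := fun w hw =>
    (hd.differentiableAt (Metric.isOpen_ball.mem_nhds hw)).hasDerivAt
  have hk : ∀ w ∈ Metric.ball c r,
      HasDerivAt (fun w => Complex.exp (-(2 * L w)) * h w) 0 w := by
    intro w hw
    have h1 := (((hL w hw).const_mul 2).neg.cexp).mul (hhd w hw)
    refine HasDerivAt.congr_deriv (f := fun w => Complex.exp (-(2 * L w)) * h w) h1 ?_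
    have h3 := hn w hw
    have h2 : 2 * (deriv h w / (2 * h w)) * h w = deriv h w := by field_simp
    linear_combination (- Complex.exp (-(2 * L w))) * h2
  have hconst : ∀ w ∈ Metric.ball c r, Complex.exp (-(2 * L w)) * h w = 1 := by
    intro w hw
    have h1 := Metric.isOpen_ball.is_const_of_deriv_eq_zero
      (convex_ball c r).isPreconnected
      (fun w hw => (hk w hw).differentiableAt.differentiableWithinAt)
      (fun w hw => (hk w hw).deriv) hw hc
    rw [h1, hLc, ← hs0, Complex.exp_neg, two_mul, Complex.exp_add, Complex.exp_log hs0']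
    field_simp
  refine ⟨fun w => Complex.exp (L w), ?_, ?_, ?_⟩
  · intro w hw
    exact (hL w hw).cexp.differentiableAt.differentiableWithinAt
  · simp only [hLc]; exact Complex.exp_log hs0'
  · intro w hw
    have h1 := hconst w hw
    rw [Complex.exp_neg, two_mul, Complex.exp_add] at h1
    have h2 := Complex.exp_ne_zero (L w)
    field_simp at h1
    exact h1.symm

theorem Pq_eq (ω z : ℂ) : Pq ω z = (z + ω / 2) ^ 2 - ω ^ 2 / 4 := by
  unfold Pq; ring

theorem basin_of_Pq {ω z : ℂ} (h : Pq ω z ∈ basin ω) : z ∈ basin ω := by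
  obtain ⟨h1, h2⟩ := h
  constructor
  · have h1' : Tendsto (fun n => (Pq ω)^[n] (Pq ω z)) atTop (𝓝 0) := h1
    simp only [← Function.iterate_succ_apply] at h1'
    exact (tendsto_add_atTop_iff_nat (f := fun n => (Pq ω)^[n] z) 1).1 h1'
  · rintro ⟨n, hn⟩
    apply h2
    refine ⟨n, ?_⟩
    rw [← Function.iterate_succ_apply, Function.iterate_succ_apply', hn]
    simp [Pq]

theorem Pq_basin {ω z : ℂ} (h : z ∈ basin ω) : Pq ω z ∈ basin ω := by
  obtain ⟨h1, h2⟩ := h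
  constructor
  · have h1' : Tendsto (fun n => (Pq ω)^[n] z) atTop (𝓝 0) := h1
    have := (tendsto_add_atTop_iff_nat (f := fun n => (Pq ω)^[n] z) 1).2 h1'
    exact this
  · rintro ⟨n, hn⟩
    exact h2 ⟨n + 1, hn⟩

theorem Pq_iter_basin {ω z : ℂ} (h : z ∈ basin ω) (n : ℕ) : (Pq ω)^[n] z ∈ basin ω := by
  induction n with
  | zero => exact h
  | succ n ih => rw [Function.iterate_succ_apply']; exact Pq_basin ih

theorem basin_bdd {ω : ℂ} (hω : ‖ω‖ = 1) {z : ℂ} (hz : z ∈ basin ω) : ‖z‖ ≤ 2 := by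
  by_contra! hlt
  have key : ∀ n : ℕ, 2 < ‖(Pq ω)^[n] z‖ := by
    intro n
    induction n with
    | zero => exact hlt
    | succ n ih =>
      rw [Function.iterate_succ_apply']
      set y := (Pq ω)^[n] z
      have : ‖y ^ 2‖ - ‖ω * y‖ ≤ ‖Pq ω y‖ := by
        have := norm_sub_le (Pq ω y) (ω * y)
        have e : Pq ω y - ω * y = y ^ 2 := by unfold Pq; ring
        rw [e] at this
        linarith
      rw [norm_mul, hω, norm_pow] at this
      nlinarith
  have h1 : Tendsto (fun n => (Pq ω)^[n] z) atTop (𝓝 0) := hz.1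
  have h2 := h1.norm
  simp only [norm_zero] at h2
  have := ge_of_tendsto h2 (Eventually.of_forall fun n => (key n).le)
  linarith

theorem lift_one {ω : ℂ} {φ : ℂ → ℂ} {b : ℂ} {r : ℝ} (hr : 0 < r)
    (hφ : DifferentiableOn ℂ φ (Metric.ball b r)) (hm : ∀ w ∈ Metric.ball b r, φ w ∈ basin ω)
    {y : ℂ} (hy : Pq ω y = φ b) (hcy : -ω / 2 ∉ connectedComponentIn (basin ω) y) :
    ∃ ψ : ℂ → ℂ, DifferentiableOn ℂ ψ (Metric.ball b r) ∧ ψ b = y ∧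
      (∀ w ∈ Metric.ball b r, Pq ω (ψ w) = φ w) ∧ (∀ w ∈ Metric.ball b r, ψ w ∈ basin ω) := by
  have hb : b ∈ Metric.ball b r := Metric.mem_ball_self hr
  have hyB : y ∈ basin ω := basin_of_Pq (hy ▸ hm b hb)
  set h : ℂ → ℂ := fun w => φ w + ω ^ 2 / 4 with hh
  have hhd : DifferentiableOn ℂ h (Metric.ball b r) := hφ.add_const _
  have hs0 : (y + ω / 2) ^ 2 = h b := by
    simp only [hh]; rw [← hy, Pq_eq]; ring
  -- general lifting on a smaller ball
  have gen : ∀ ρ, 0 < ρ → ρ ≤ r → (∀ w ∈ Metric.ball b ρ, h w ≠ 0) →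
      ∃ ψ : ℂ → ℂ, DifferentiableOn ℂ ψ (Metric.ball b ρ) ∧ ψ b = y ∧
      (∀ w ∈ Metric.ball b ρ, Pq ω (ψ w) = φ w) ∧ (∀ w ∈ Metric.ball b ρ, ψ w ∈ basin ω) := by
    intro ρ hρ hρr hne
    have hsub := Metric.ball_subset_ball (x := b) hρr
    obtain ⟨s, hsd, hsb, hs⟩ := sqrt_ball hρ (hhd.mono hsub) hne _ hs0
    have e : ∀ w ∈ Metric.ball b ρ, Pq ω (s w - ω / 2) = φ w := by
      intro w hw
      rw [Pq_eq, sub_add_cancel, hs w hw]; simp [hh]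
    refine ⟨fun w => s w - ω / 2, hsd.sub_const _, by simp [hsb], e, ?_⟩
    intro w hw
    apply basin_of_Pq
    rw [e w hw]
    exact hm w (hsub hw)
  by_cases hz : ∀ w ∈ Metric.ball b r, h w ≠ 0
  · exact gen r hr le_rfl hz
  exfalso
  push Not at hz
  obtain ⟨w1, hw1, hw1z⟩ := hz
  -- nearest zero
  have hcbsub : Metric.closedBall b (dist w1 b) ⊆ Metric.ball b r :=
    Metric.closedBall_subset_ball hw1
  have hK : IsCompact (Metric.closedBall b (dist w1 b) ∩ h ⁻¹' {0}) := by
    apply (isCompact_closedBall b (dist w1 b)).of_isClosed_subset _ inter_subset_left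
    exact (hhd.continuousOn.mono hcbsub).preimage_isClosed_of_isClosed
      Metric.isClosed_closedBall isClosed_singleton
  obtain ⟨w2, ⟨hw2m, hw2z⟩, hw2⟩ := hK.exists_isMinOn
    ⟨w1, Metric.mem_closedBall.2 le_rfl, hw1z⟩
    (f := fun w => dist w b) (by fun_prop)
  have hw2b := hcbsub hw2m
  have hw2z' : h w2 = 0 := hw2z
  have hcB : -ω / 2 ∈ basin ω := by
    apply basin_of_Pq
    have : Pq ω (-ω / 2) = φ w2 := by
      rw [Pq_eq]
      have : φ w2 = h w2 - ω ^ 2 / 4 := by simp [hh]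
      rw [this, hw2z']; ring
    rw [this]; exact hm w2 hw2b
  by_cases hbw : w2 = b
  · have : y = -ω / 2 := by
      rw [hbw] at hw2z'
      rw [hw2z'] at hs0
      have := pow_eq_zero_iff (two_ne_zero) |>.1 hs0
      linear_combination this
    rw [this] at hcy
    exact hcy (mem_connectedComponentIn hcB)
  have hρ : 0 < dist w2 b := dist_pos.2 hbw
  obtain ⟨ψ, hψd, hψb, hψ, hψB⟩ := gen (dist w2 b) hρ (le_of_lt hw2b) (by
    intro w hw hw0
    have hw' : dist w b < dist w2 b := hw
    have : dist w2 b ≤ dist w b := hw2 ⟨Metric.mem_closedBall.2 (hw'.le.trans hw2m), hw0⟩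
    linarith)
  apply hcy
  have hpre : IsPreconnected (ψ '' Metric.ball b (dist w2 b)) :=
    (convex_ball _ _).isPreconnected.image _ hψd.continuousOn
  have hcl : -ω / 2 ∈ closure (ψ '' Metric.ball b (dist w2 b)) := by
    have hw2cl : w2 ∈ closure (Metric.ball b (dist w2 b)) := by
      rw [closure_ball _ hρ.ne']; exact Metric.mem_closedBall.2 le_rfl
    have hne : (𝓝[Metric.ball b (dist w2 b)] w2).NeBot := mem_closure_iff_nhdsWithin_neBot.1 hw2cl
    have hcont : Tendsto h (𝓝[Metric.ball b (dist w2 b)] w2) (𝓝 0) := by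
      rw [← hw2z']
      exact ((hhd.differentiableAt (Metric.isOpen_ball.mem_nhds hw2b)).continuousAt).tendsto.mono_left
        nhdsWithin_le_nhds
    have hsq : Tendsto (fun w => (ψ w + ω / 2)) (𝓝[Metric.ball b (dist w2 b)] w2) (𝓝 0) := by
      rw [tendsto_zero_iff_norm_tendsto_zero]
      have h1 : Tendsto (fun w => Real.sqrt ‖h w‖) (𝓝[Metric.ball b (dist w2 b)] w2) (𝓝 0) := by
        have := hcont.norm.sqrt
        simpa using this
      refine h1.congr' ?_
      filter_upwards [self_mem_nhdsWithin] with w hw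
      have : h w = (ψ w + ω / 2) ^ 2 := by
        simp only [hh]; rw [← hψ w hw, Pq_eq]; ring
      rw [this, norm_pow, Real.sqrt_sq (norm_nonneg _)]
    have hψt : Tendsto ψ (𝓝[Metric.ball b (dist w2 b)] w2) (𝓝 (-ω / 2)) := by
      have := hsq.sub_const (ω / 2)
      simp only [add_sub_cancel_right] at this
      convert this using 2
      ring
    apply mem_closure_of_tendsto hψt
    filter_upwards [self_mem_nhdsWithin] with w hw using mem_image_of_mem _ hw
  have hpre2 : IsPreconnected (insert (-ω / 2) (ψ '' Metric.ball b (dist w2 b))) :=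
    hpre.subset_closure (subset_insert _ _) (insert_subset hcl subset_closure)
  refine hpre2.subset_connectedComponentIn
    (mem_insert_of_mem _ ⟨b, Metric.mem_ball_self hρ, hψb⟩) ?_ (mem_insert _ _)
  apply insert_subset hcB
  rintro _ ⟨w, hw, rfl⟩
  exact hψB w hw

theorem lift_many {ω : ℂ} {φ : ℂ → ℂ} {b : ℂ} {r : ℝ} (hr : 0 < r)
    (hφ : DifferentiableOn ℂ φ (Metric.ball b r)) (hm : ∀ w ∈ Metric.ball b r, φ w ∈ basin ω)
    (N : ℕ) : ∀ {y : ℂ}, (Pq ω)^[N] y = φ b →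
    (∀ k, -ω / 2 ∉ connectedComponentIn (basin ω) ((Pq ω)^[k] y)) →
    ∃ ψ : ℂ → ℂ, DifferentiableOn ℂ ψ (Metric.ball b r) ∧ ψ b = y ∧
      (∀ w ∈ Metric.ball b r, (Pq ω)^[N] (ψ w) = φ w) ∧
      (∀ w ∈ Metric.ball b r, ψ w ∈ basin ω) := by
  induction N with
  | zero =>
    intro y hy _
    exact ⟨φ, hφ, hy.symm, fun _ _ => rfl, hm⟩
  | succ N ih =>
    intro y hy hk
    obtain ⟨ψ, h1, h2, h3, h4⟩ := ih (y := Pq ω y) hy (fun k => hk (k + 1))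
    obtain ⟨χ, g1, g2, g3, g4⟩ := lift_one hr h1 h4 h2.symm (hk 0)
    refine ⟨χ, g1, g2, ?_, g4⟩
    intro w hw
    rw [Function.iterate_succ_apply, g3 w hw, h3 w hw]

theorem parabolic_form {g : ℂ → ℂ} (hg : Differentiable ℂ g) (h0 : g 0 = 0)
    (h1 : HasDerivAt g 1 0) (hne : ∃ z, g z ≠ z) :
    ∃ (m : ℕ) (e : ℂ → ℂ), 1 ≤ m ∧ AnalyticAt ℂ e 0 ∧ e 0 ≠ 0 ∧
      ∀ᶠ z in 𝓝 0, g z = z * (1 + z ^ m * e z) := by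
  have hd : AnalyticAt ℂ (fun z => g z - z) 0 := (hg.sub differentiable_id).analyticAt 0
  have hnz : ¬ ∀ᶠ z in 𝓝 (0 : ℂ), g z - z = 0 := by
    intro hev
    obtain ⟨z, hz⟩ := hne
    apply hz
    have : g = id := AnalyticOnNhd.eq_of_eventuallyEq (𝕜 := ℂ) (z₀ := 0)
      (fun z _ => hg.analyticAt z) (fun z _ => differentiable_id.analyticAt z)
      (by filter_upwards [hev] with z hz using sub_eq_zero.1 hz)
    rw [this]; rfl
  obtain ⟨n, e, he, he0, hev⟩ := hd.exists_eventuallyEq_pow_smul_nonzero_iff.2 hnz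
  simp only [sub_zero, smul_eq_mul] at hev
  match n, hev with
  | 0, hev =>
    exfalso
    have := hev.self_of_nhds
    simp [h0] at this
    exact he0 this.symm
  | 1, hev =>
    exfalso
    have a1 : HasDerivAt (fun z => g z - z) (1 - 1) 0 := h1.sub (hasDerivAt_id 0)
    have a2 : HasDerivAt (fun z : ℂ => z ^ 1 * e z) (1 * e 0 + 0 * deriv e 0) 0 := by
      simp only [pow_one]
      exact (hasDerivAt_id (0 : ℂ)).mul he.differentiableAt.hasDerivAt
    have a3 := a2.congr_of_eventuallyEq hev
    have := a1.unique a3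
    simp at this
    exact he0 this.symm
  | m + 2, hev =>
    refine ⟨m + 1, e, by omega, he, he0, ?_⟩
    filter_upwards [hev] with z hz
    have : g z = z + z ^ (m + 2) * e z := by rw [← hz]; ring
    rw [this]; ring

theorem petal_s6 {g : ℂ → ℂ} (hg : Differentiable ℂ g) (h0 : g 0 = 0)
    (h1 : HasDerivAt g 1 0) (hne : ∃ z, g z ≠ z) :
    ∃ (τ F : ℂ → ℂ) (R : ℝ), 1 ≤ R ∧ Tendsto τ (comap Complex.re atTop) (𝓝 0) ∧
      ∀ w : ℂ, R < w.re → DifferentiableAt ℂ τ w ∧ deriv τ w ≠ 0 ∧ τ w ≠ 0 ∧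
        DifferentiableAt ℂ F w ∧ ‖F w - w - 1‖ ≤ 1 / 16 ∧ g (τ w) = τ (F w) := by
  obtain ⟨m, e, hm, he, he0, hev⟩ := parabolic_form hg h0 h1 hne
  have hm0 : (m : ℂ) ≠ 0 := by exact_mod_cast (by omega : m ≠ 0)
  have hmR : (0 : ℝ) < m := by exact_mod_cast hm
  obtain ⟨v, hv⟩ := IsAlgClosed.exists_pow_nat_eq (-1 / (m * e 0) : ℂ) (by omega : 0 < m)
  have hv0 : v ≠ 0 := by
    rintro rfl
    rw [zero_pow (by omega)] at hv
    have : (-1 / (m * e 0) : ℂ) ≠ 0 := by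
      apply div_ne_zero (by norm_num) (mul_ne_zero hm0 he0)
    exact this hv.symm
  set τ : ℂ → ℂ := fun w => v * Complex.exp (-(Complex.log w) / m) with hτ
  set x : ℂ → ℂ := fun w => (τ w) ^ m * e (τ w) with hx
  set F : ℂ → ℂ := fun w => Complex.exp (Complex.log w - m * Complex.log (1 + x w)) with hF
  set l : Filter ℂ := comap Complex.re atTop with hl
  have hre : Tendsto Complex.re l atTop := tendsto_comap
  have hnorm : Tendsto (fun w : ℂ => ‖w‖) l atTop :=
    tendsto_atTop_mono (fun w => Complex.re_le_norm w) hre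
  have hpos : ∀ᶠ w in l, 0 < w.re := hre.eventually_gt_atTop 0
  have hτ0 : Tendsto τ l (𝓝 0) := by
    rw [tendsto_zero_iff_norm_tendsto_zero]
    have a1 : Tendsto (fun w : ℂ => ‖v‖ * Real.exp (-(Real.log ‖w‖ / m))) l (𝓝 (‖v‖ * 0)) := by
      apply Tendsto.const_mul
      apply Real.tendsto_exp_atBot.comp
      apply tendsto_neg_atTop_atBot.comp
      exact (Real.tendsto_log_atTop.comp hnorm).atTop_div_const hmR
    rw [mul_zero] at a1
    refine a1.congr ?_
    intro w
    simp only [hτ, norm_mul, Complex.norm_exp]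
    congr 2
    have : -(Complex.log w) / (m : ℂ) = -(Complex.log w) / ((m : ℝ) : ℂ) := by simp
    rw [this, Complex.div_ofReal_re, Complex.neg_re, Complex.log_re, neg_div]
  have hτm : ∀ w : ℂ, w ≠ 0 → (τ w) ^ m = v ^ m / w := by
    intro w hw
    simp only [hτ, mul_pow, ← Complex.exp_nat_mul]
    rw [mul_div_cancel₀ _ hm0, Complex.exp_neg, Complex.exp_log hw]
    rfl
  have hτne : ∀ w, τ w ≠ 0 := fun w => mul_ne_zero hv0 (Complex.exp_ne_zero _)
  have hx0 : Tendsto x l (𝓝 0) := by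
    have a1 : Tendsto x l (𝓝 (0 ^ m * e 0)) :=
      (hτ0.pow m).mul (he.continuousAt.tendsto.comp hτ0)
    rwa [zero_pow (by omega), zero_mul] at a1
  -- k
  set k : ℂ → ℂ := fun y => Complex.exp (-(m * Complex.log (1 + y))) with hk
  have hkd : HasDerivAt k (-m) 0 := by
    have a1 : HasDerivAt (fun y : ℂ => 1 + y) 1 0 := (hasDerivAt_id (0 : ℂ)).const_add 1
    have a2 := (((a1.clog (by simp)).const_mul (m : ℂ)).neg).cexp
    refine HasDerivAt.congr_deriv (f := k) a2 ?_
    simp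
  have hk0 : k 0 = 1 := by simp [hk]
  have hds : Tendsto (dslope k 0) (𝓝 0) (𝓝 (-m)) := by
    have := (continuousAt_dslope_same.2 hkd.differentiableAt).tendsto
    rwa [dslope_same, hkd.deriv] at this
  have hFk : ∀ w : ℂ, w ≠ 0 → F w = w * k (x w) := by
    intro w hw
    simp only [hF, hk, sub_eq_add_neg, Complex.exp_add, Complex.exp_log hw]
  have hFt : Tendsto (fun w => F w - w - 1) l (𝓝 0) := by
    have a1 : Tendsto (fun w => (v ^ m * e (τ w)) * dslope k 0 (x w) - 1) l
        (𝓝 ((v ^ m * e 0) * (-m) - 1)) :=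
      (((he.continuousAt.tendsto.comp hτ0).const_mul _).mul (hds.comp hx0)).sub_const 1
    have a2 : (v ^ m * e 0) * (-m) - 1 = 0 := by
      rw [hv]; field_simp; ring
    rw [a2] at a1
    refine a1.congr' ?_
    filter_upwards [hpos] with w hw
    have hw0 : w ≠ 0 := by rintro rfl; simp at hw
    rw [hFk w hw0]
    have a3 : x w * dslope k 0 (x w) = k (x w) - 1 := by
      have := sub_smul_dslope k 0 (x w)
      rw [hk0] at this
      simpa using this
    have a4 : v ^ m * e (τ w) = w * x w := by
      simp only [hx]; rw [hτm w hw0]; field_simp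
    rw [a4, mul_assoc, a3]; ring
  have hlog0 : Tendsto (fun w => (m : ℂ) * Complex.log (1 + x w)) l (𝓝 0) := by
    have a1 : Tendsto (fun y : ℂ => (m : ℂ) * Complex.log (1 + y)) (𝓝 0) (𝓝 0) := by
      have : ContinuousAt (fun y : ℂ => (m : ℂ) * Complex.log (1 + y)) 0 := by
        apply ContinuousAt.mul continuousAt_const
        apply ContinuousAt.clog (by fun_prop) (by simp)
      have := this.tendsto
      simpa using this
    exact a1.comp hx0
  have hall : ∀ᶠ w in l, 0 < w.re ∧ g (τ w) = τ w * (1 + x w) ∧ AnalyticAt ℂ e (τ w) ∧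
      ‖x w‖ < 1 ∧ ‖(m : ℂ) * Complex.log (1 + x w)‖ < 1 ∧ ‖F w - w - 1‖ ≤ 1 / 16 := by
    filter_upwards [hpos, hτ0.eventually hev, hτ0.eventually he.eventually_analyticAt,
      hx0.norm.eventually (gt_mem_nhds (by simp : ‖(0 : ℂ)‖ < 1)),
      hlog0.norm.eventually (gt_mem_nhds (by simp : ‖(0 : ℂ)‖ < 1)),
      hFt.norm.eventually (gt_mem_nhds (by simp : ‖(0 : ℂ)‖ < 1 / 16))] with w a1 a2 a3 a4 a5 a6
    exact ⟨a1, a2, a3, a4, a5, a6.le⟩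
  rw [hl, eventually_comap, eventually_atTop] at hall
  obtain ⟨R, hR⟩ := hall
  refine ⟨τ, F, max R 1, le_max_right _ _, hτ0, ?_⟩
  intro w hw
  obtain ⟨b1, b2, b3, b4, b5, b6⟩ := hR w.re ((le_max_left _ _).trans hw.le) w rfl
  have hslit : w ∈ Complex.slitPlane := Or.inl b1
  have hw0 : w ≠ 0 := Complex.slitPlane_ne_zero hslit
  have hτd : HasDerivAt τ (v * (Complex.exp (-(Complex.log w) / m) * (-w⁻¹ / m))) w :=
    ((((Complex.hasDerivAt_log hslit).neg).div_const (m : ℂ)).cexp).const_mul v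
  have hslit2 : 1 + x w ∈ Complex.slitPlane := Complex.mem_slitPlane_of_norm_lt_one b4
  have hxd : DifferentiableAt ℂ x w :=
    (hτd.differentiableAt.pow m).mul (b3.differentiableAt.comp w hτd.differentiableAt)
  refine ⟨hτd.differentiableAt, ?_, hτne w, ?_, b6, ?_⟩
  · rw [hτd.deriv]
    refine mul_ne_zero hv0 (mul_ne_zero (Complex.exp_ne_zero _) (div_ne_zero ?_ hm0))
    exact neg_ne_zero.2 (inv_ne_zero hw0)
  · apply DifferentiableAt.cexp
    apply (Complex.hasDerivAt_log hslit).differentiableAt.sub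
    apply DifferentiableAt.const_mul
    exact (hxd.const_add 1).clog hslit2
  · rw [b2]
    have him : |(Complex.log w).im| < Real.pi / 2 := by
      rw [Complex.log_im]
      exact Complex.abs_arg_lt_pi_div_two_iff.2 (Or.inl b1)
    have him2 : |((m : ℂ) * Complex.log (1 + x w)).im| < 1 :=
      (Complex.abs_im_le_norm _).trans_lt b5
    have hpi := Real.pi_gt_three
    rw [abs_lt] at him him2
    have hlF : Complex.log (F w) = Complex.log w - m * Complex.log (1 + x w) := by
      apply Complex.log_exp
      · rw [Complex.sub_im]; linarith
      · rw [Complex.sub_im]; linarith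
    simp only [hτ]
    rw [hlF]
    have : -(Complex.log w - m * Complex.log (1 + x w)) / (m : ℂ)
        = -(Complex.log w) / m + Complex.log (1 + x w) := by
      field_simp; ring
    rw [this, Complex.exp_add, Complex.exp_log (Complex.slitPlane_ne_zero hslit2)]
    simp only [hx, hτ]
    ring

theorem critical_point_in_immediate_basin
    (p q : ℕ) (hq : 2 ≤ q) (hp0 : 0 < p) (hpq : p < q) (hcop : Nat.Coprime p q)
    (ω : ℂ) (hω : ω = Complex.exp (2 * Real.pi * Complex.I * (p : ℂ) / (q : ℂ))) :
    (0 : ℂ) ∈ closure (connectedComponentIn (basin ω) (-ω / 2)) := by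
  have hq0 : (q : ℂ) ≠ 0 := by exact_mod_cast (by omega : q ≠ 0)
  have hωq : ω ^ q = 1 := by
    rw [hω, ← Complex.exp_nat_mul, mul_div_cancel₀ _ hq0, Complex.exp_eq_one_iff]
    exact ⟨p, by push_cast; ring⟩
  have hω1 : ‖ω‖ = 1 := norm_eq_one_of_pow_eq_one hωq (by omega)
  have hPd : Differentiable ℂ (Pq ω) := by unfold Pq; fun_prop
  have hPn : ∀ n, Differentiable ℂ ((Pq ω)^[n]) := fun n => hPd.iterate n
  have hP0 : Pq ω 0 = 0 := by simp [Pq]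
  have hPn0 : ∀ n, (Pq ω)^[n] 0 = 0 := fun n => Function.iterate_fixed hP0 n
  have hPder : ∀ n : ℕ, HasDerivAt ((Pq ω)^[n]) (ω ^ n) 0 := by
    intro n
    have a1 : HasDerivAt (Pq ω) ω 0 := by
      have := ((hasDerivAt_id (0 : ℂ)).const_mul ω).add ((hasDerivAt_id (0 : ℂ)).pow 2)
      refine HasDerivAt.congr_deriv (f := Pq ω) this ?_
      simp
    exact HasDerivAt.iterate (x := (0 : ℂ)) a1 hP0 n
  set g : ℂ → ℂ := (Pq ω)^[q] with hg
  have hgn : ∃ z, g z ≠ z := by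
    refine ⟨3, ?_⟩
    have key : ∀ n : ℕ, 3 + (n : ℝ) ≤ ‖(Pq ω)^[n] 3‖ := by
      intro n
      induction n with
      | zero => simp
      | succ n ih =>
        rw [Function.iterate_succ_apply']
        set y := (Pq ω)^[n] 3
        have : ‖y ^ 2‖ - ‖ω * y‖ ≤ ‖Pq ω y‖ := by
          have := norm_sub_le (Pq ω y) (ω * y)
          have e : Pq ω y - ω * y = y ^ 2 := by unfold Pq; ring
          rw [e] at this
          linarith
        rw [norm_mul, hω1, norm_pow] at this
        push_cast
        have hn : (0 : ℝ) ≤ n := by positivity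
        nlinarith
    intro h
    have h2 := key q
    rw [show (Pq ω)^[q] 3 = 3 from h] at h2
    have : (2 : ℝ) ≤ q := by exact_mod_cast hq
    norm_num at h2
    linarith
  obtain ⟨τ, F, R, hR1, hτ0, hall⟩ := petal_s6 (hPn q) (hPn0 q) (hωq ▸ hPder q) hgn
  -- iterates of F
  have hFre : ∀ w : ℂ, R < w.re → w.re + 1 / 2 ≤ (F w).re := by
    intro w hw
    have h1 := (hall w hw).2.2.2.2.1
    have h2 := (Complex.abs_re_le_norm _).trans h1
    simp only [Complex.sub_re, Complex.one_re] at h2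
    rw [abs_le] at h2
    linarith
  have hFn : ∀ w : ℂ, R < w.re → ∀ n : ℕ, w.re + n / 2 ≤ (F^[n] w).re := by
    intro w hw n
    induction n with
    | zero => simp
    | succ n ih =>
      rw [Function.iterate_succ_apply']
      have hn : (0 : ℝ) ≤ n := by positivity
      have := hFre (F^[n] w) (by linarith)
      push_cast
      linarith
  have hFnR : ∀ w : ℂ, R < w.re → ∀ n : ℕ, R < (F^[n] w).re := by
    intro w hw n
    have := hFn w hw n
    have hn : (0 : ℝ) ≤ n := by positivity
    linarith
  have hconj : ∀ w : ℂ, R < w.re → ∀ n : ℕ, (Pq ω)^[q * n] (τ w) = τ (F^[n] w) := by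
    intro w hw n
    induction n with
    | zero => simp
    | succ n ih =>
      rw [Nat.mul_succ, Nat.add_comm, Function.iterate_add_apply, ih,
        Function.iterate_succ_apply']
      exact (hall _ (hFnR w hw n)).2.2.2.2.2
  have hτF : ∀ w : ℂ, R < w.re → Tendsto (fun n => τ (F^[n] w)) atTop (𝓝 0) := by
    intro w hw
    apply hτ0.comp
    rw [tendsto_comap_iff]
    refine tendsto_atTop_mono (hFn w hw) ?_
    apply tendsto_atTop_add_const_left
    exact tendsto_natCast_atTop_atTop.atTop_div_const (by norm_num)
  have hsubseq : ∀ w : ℂ, R < w.re → ∀ j : ℕ,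
      Tendsto (fun n => (Pq ω)^[q * n + j] (τ w)) atTop (𝓝 0) := by
    intro w hw j
    have a1 : Tendsto ((Pq ω)^[j]) (𝓝 0) (𝓝 0) := by
      have := ((hPn j).continuous.tendsto 0)
      rwa [hPn0] at this
    refine (a1.comp (hτF w hw)).congr ?_
    intro n
    rw [Function.comp_apply, ← hconj w hw n, ← Function.iterate_add_apply, Nat.add_comm]
  have hV : ∀ w : ℂ, R < w.re → τ w ∈ basin ω := by
    intro w hw
    constructor
    · show Tendsto (fun n => (Pq ω)^[n] (τ w)) atTop (𝓝 0)
      rw [Metric.tendsto_atTop]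
      intro ε hε
      have a1 : ∀ j : ℕ, ∃ N, ∀ n ≥ N, dist ((Pq ω)^[q * n + j] (τ w)) 0 < ε := fun j =>
        Metric.tendsto_atTop.1 (hsubseq w hw j) ε hε
      choose N hN using a1
      refine ⟨q * ((Finset.range q).sup N), ?_⟩
      intro n hn
      have hqp : 0 < q := by omega
      have h1 : (Finset.range q).sup N ≤ n / q := by
        rw [Nat.le_div_iff_mul_le hqp, Nat.mul_comm]; exact hn
      have h2 : N (n % q) ≤ (Finset.range q).sup N :=
        Finset.le_sup (Finset.mem_range.2 (Nat.mod_lt _ hqp))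
      have := hN (n % q) (n / q) (h2.trans h1)
      rwa [Nat.div_add_mod] at this
    · rintro ⟨n, hn⟩
      have h1 : (Pq ω)^[q * n] (τ w) = 0 := by
        have : q * n = (q * n - n) + n := by
          have : n ≤ q * n := Nat.le_mul_of_pos_left n (by omega)
          omega
        rw [this, Function.iterate_add_apply, hn, hPn0]
      rw [hconj w hw n] at h1
      exact (hall _ (hFnR w hw n)).2.2.1 h1
  set w0 : ℂ := ((2 * R : ℝ) : ℂ) with hw0
  have hw0re : w0.re = 2 * R := by simp [hw0]
  have hw0R : R < w0.re := by rw [hw0re]; linarith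
  by_contra hcon
  have hHalf : IsPreconnected {w : ℂ | R < w.re} := (convex_halfSpace_re_gt R).isPreconnected
  have hτc : ContinuousOn τ {w : ℂ | R < w.re} := fun w hw =>
    (hall w hw).1.continuousAt.continuousWithinAt
  have hno : ∀ k, -ω / 2 ∉ connectedComponentIn (basin ω) ((Pq ω)^[k] (τ w0)) := by
    intro k hk
    apply hcon
    rw [← connectedComponentIn_eq hk]
    have hpre : IsPreconnected ((Pq ω)^[k] '' (τ '' {w : ℂ | R < w.re})) :=
      (hHalf.image _ hτc).image _ (hPn k).continuous.continuousOn
    have hsub := hpre.subset_connectedComponentIn (x := (Pq ω)^[k] (τ w0)) (F := basin ω)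
      ⟨_, ⟨w0, hw0R, rfl⟩, rfl⟩ (by
        rintro _ ⟨_, ⟨w, hw, rfl⟩, rfl⟩
        exact Pq_iter_basin (hV w hw) k)
    refine closure_mono hsub ?_
    apply mem_closure_of_tendsto (hsubseq w0 hw0R k)
    refine Eventually.of_forall fun n => ?_
    refine ⟨τ (F^[n] w0), ⟨_, hFnR w0 hw0R n, rfl⟩, ?_⟩
    rw [← hconj w0 hw0R, ← Function.iterate_add_apply, Nat.add_comm]
  -- derivative estimate
  have hFd : ∀ n : ℕ, ∃ D : ℂ, HasDerivAt (F^[n]) D w0 ∧ ‖D‖ ^ 2 ≤ n + 1 := by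
    intro n
    induction n with
    | zero => exact ⟨1, hasDerivAt_id _, by simp⟩
    | succ n ih =>
      obtain ⟨D, hD, hDn⟩ := ih
      set u := F^[n] w0 with hu
      have hure : R + (n + 1) / 2 ≤ u.re := by
        have := hFn w0 hw0R n
        rw [hw0re] at this
        linarith
      have hn : (0 : ℝ) ≤ n := by positivity
      have hFu := (hall u (by linarith)).2.2.2.1
      have hρ : (0 : ℝ) < (n + 1) / 4 := by positivity
      have hin : ∀ w ∈ Metric.closedBall u (((n : ℝ) + 1) / 4), R < w.re := by
        intro w hw
        rw [Metric.mem_closedBall, dist_eq_norm] at hw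
        have := (Complex.abs_re_le_norm _).trans hw
        rw [Complex.sub_re, abs_le] at this
        linarith
      have hcau : ‖deriv (fun w => F w - w - 1) u‖ ≤ (1 / 16) / (((n : ℝ) + 1) / 4) := by
        apply Complex.norm_deriv_le_of_forall_mem_sphere_norm_le hρ
        · apply DifferentiableOn.diffContOnCl
          rw [closure_ball _ hρ.ne']
          intro w hw
          exact (((hall w (hin w hw)).2.2.2.1.sub differentiableAt_id).sub_const
            1).differentiableWithinAt
        · intro w hw
          exact (hall w (hin w (Metric.sphere_subset_closedBall hw))).2.2.2.2.1
      have hder : HasDerivAt (fun w => F w - w - 1) (deriv F u - 1) u :=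
        (hFu.hasDerivAt.sub (hasDerivAt_id u)).sub_const 1
      rw [hder.deriv] at hcau
      have hb : ‖deriv F u‖ ≤ 1 + 1 / 4 / (n + 1) := by
        have a1 : ‖deriv F u‖ ≤ ‖deriv F u - 1‖ + ‖(1 : ℂ)‖ := by
          simpa using norm_add_le (deriv F u - 1) 1
        have a2 : (1 / 16) / (((n : ℝ) + 1) / 4) = 1 / 4 / (n + 1) := by
          field_simp; norm_num
        rw [norm_one] at a1
        rw [a2] at hcau
        linarith
      refine ⟨deriv F u * D, ?_, ?_⟩
      · rw [Function.iterate_succ']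
        exact hFu.hasDerivAt.comp w0 hD
      · rw [norm_mul, mul_pow]
        have a1 : ‖deriv F u‖ ^ 2 ≤ (1 + 1 / 4 / ((n : ℝ) + 1)) ^ 2 :=
          pow_le_pow_left₀ (norm_nonneg _) hb 2
        have a2 : (1 + 1 / 4 / ((n : ℝ) + 1)) ^ 2 * (n + 1) ≤ n + 1 + 1 := by
          have h3 : (1 / 4 / ((n : ℝ) + 1)) * (n + 1) = 1 / 4 := by field_simp
          have h4 : 1 / 4 / ((n : ℝ) + 1) ≤ 1 / 4 := by
            apply div_le_self (by norm_num); linarith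
          have h5 : (0 : ℝ) ≤ 1 / 4 / ((n : ℝ) + 1) := by positivity
          nlinarith
        push_cast
        calc ‖deriv F u‖ ^ 2 * ‖D‖ ^ 2
            ≤ (1 + 1 / 4 / ((n : ℝ) + 1)) ^ 2 * (n + 1) := by gcongr
          _ ≤ _ := a2
  -- main estimate
  have hmain : ∀ n : ℕ, ‖deriv τ w0‖ * (n + 1) ≤ 8 * Real.sqrt (n + 1) := by
    intro n
    obtain ⟨D, hD, hDn⟩ := hFd n
    set u := F^[n] w0 with hu
    have hn : (0 : ℝ) ≤ n := by positivity
    have hure : R + (n + 1) / 2 ≤ u.re := by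
      have := hFn w0 hw0R n
      rw [hw0re] at this
      linarith
    have huR : R < u.re := by linarith
    have hr : (0 : ℝ) < (n + 1) / 2 := by positivity
    have hin : ∀ w ∈ Metric.ball u (((n : ℝ) + 1) / 2), R < w.re := by
      intro w hw
      rw [Metric.mem_ball, dist_eq_norm] at hw
      have := (Complex.abs_re_le_norm _).trans_lt hw
      rw [Complex.sub_re, abs_lt] at this
      linarith
    obtain ⟨φ, hφd, hφu, hφ, hφB⟩ := lift_many (φ := τ) (b := u) hr
      (fun w hw => (hall w (hin w hw)).1.differentiableWithinAt)
      (fun w hw => hV w (hin w hw)) (q * n) (y := τ w0) (hconj w0 hw0R n) hno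
    have hub : u ∈ Metric.ball u (((n : ℝ) + 1) / 2) := Metric.mem_ball_self hr
    have hφda : HasDerivAt φ (deriv φ u) u :=
      (hφd.differentiableAt (Metric.isOpen_ball.mem_nhds hub)).hasDerivAt
    have hρ : (0 : ℝ) < (n + 1) / 4 := by positivity
    have hsub : Metric.closedBall u (((n : ℝ) + 1) / 4) ⊆ Metric.ball u (((n : ℝ) + 1) / 2) :=
      Metric.closedBall_subset_ball (by linarith)
    have hcau : ‖deriv φ u‖ ≤ 2 / (((n : ℝ) + 1) / 4) := by
      apply Complex.norm_deriv_le_of_forall_mem_sphere_norm_le hρ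
      · apply DifferentiableOn.diffContOnCl
        rw [closure_ball _ hρ.ne']
        exact hφd.mono hsub
      · intro w hw
        exact basin_bdd hω1 (hφB w (hsub (Metric.sphere_subset_closedBall hw)))
    set E := deriv ((Pq ω)^[q * n]) (τ w0) with hE
    have hEd : HasDerivAt ((Pq ω)^[q * n]) E (τ w0) := (hPn _ _).hasDerivAt
    have e1 : E * deriv φ u = deriv τ u := by
      have a1 : HasDerivAt ((Pq ω)^[q * n] ∘ φ) (E * deriv φ u) u :=
        HasDerivAt.comp u (by rw [hφu]; exact hEd) hφda
      have a2 : HasDerivAt τ (E * deriv φ u) u := by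
        refine a1.congr_of_eventuallyEq ?_
        filter_upwards [Metric.isOpen_ball.mem_nhds hub] with w hw using (hφ w hw).symm
      exact a2.deriv.symm
    have e2 : E * deriv τ w0 = deriv τ u * D := by
      have a1 : HasDerivAt ((Pq ω)^[q * n] ∘ τ) (E * deriv τ w0) w0 :=
        HasDerivAt.comp w0 hEd (hall w0 hw0R).1.hasDerivAt
      have a2 : HasDerivAt (τ ∘ F^[n]) (deriv τ u * D) w0 :=
        HasDerivAt.comp w0 (hall u huR).1.hasDerivAt hD
      refine a1.unique (a2.congr_of_eventuallyEq ?_)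
      have ho : IsOpen {w : ℂ | R < w.re} := isOpen_lt continuous_const Complex.continuous_re
      filter_upwards [ho.mem_nhds hw0R] with w hw using hconj w hw n
    have hE0 : E ≠ 0 := by
      intro h
      rw [h, zero_mul] at e1
      exact (hall u huR).2.1 e1.symm
    have e3 : deriv τ w0 = deriv φ u * D := by
      apply mul_left_cancel₀ hE0
      rw [e2, ← e1]; ring
    have hDs : ‖D‖ ≤ Real.sqrt (n + 1) := Real.le_sqrt_of_sq_le hDn
    have hc2 : ‖deriv φ u‖ * (n + 1) ≤ 8 := by
      have : 2 / (((n : ℝ) + 1) / 4) * (n + 1) = 8 := by field_simp; norm_num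
      rw [← this]
      gcongr
    rw [e3, norm_mul]
    calc ‖deriv φ u‖ * ‖D‖ * (n + 1) = (‖deriv φ u‖ * (n + 1)) * ‖D‖ := by ring
      _ ≤ 8 * Real.sqrt (n + 1) := by gcongr
  have hpos : 0 < ‖deriv τ w0‖ := norm_pos_iff.2 (hall w0 hw0R).2.1
  obtain ⟨n, hn⟩ := exists_nat_gt ((8 / ‖deriv τ w0‖) ^ 2)
  have h1 := hmain n
  have h2 : (0 : ℝ) < (n : ℝ) + 1 := by positivity
  have h3 := Real.sq_sqrt h2.le
  have h4 := Real.sqrt_pos.2 h2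
  set s := Real.sqrt ((n : ℝ) + 1)
  rw [← h3] at h1
  have h5 : ‖deriv τ w0‖ * s ≤ 8 := by
    by_contra! h
    nlinarith
  have h6 : s ≤ 8 / ‖deriv τ w0‖ := by
    rw [le_div_iff₀ hpos]; linarith
  have h7 : s ^ 2 ≤ (8 / ‖deriv τ w0‖) ^ 2 := pow_le_pow_left₀ h4.le h6 2
  rw [h3] at h7
  linarith
end

section
/- Leau–Fatou attracting petals exist for P_ω: there exist q pairwise disjoint open connected sets U_0, …, U_{q−1} ⊆ Λ_ω such that for each j the point 0 lies in the frontier of U_j, P_ω(U_j) ⊆ U_{(j+p) mod q} (so each U_j satisfies P_ω^q(U_j) ⊆ U_j), and for every z ∈ U_j the iterates P_ω^n(z) converge to 0 as n → ∞. -/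
open Complex Filter Topology Set

lemma petal_step (m : ℕ) (hm : 1 ≤ m) (δ ε : ℝ) (hδ : 0 < δ) (hmδ : m * δ ≤ 1)
    (hε : ε ≤ 1/4) (hε' : ε ≤ m * δ / 2) (s L : ℂ) (hs : |s.im| < δ)
    (hρ : m * Real.exp (m * s.re) ≤ 1)
    (hL : ‖L + Complex.exp (m * s)‖ ≤ ε * ‖Complex.exp (m * s)‖) :
    |(s + L).im| < δ ∧ (s + L).re ≤ s.re - Real.exp (m * s.re) / 4 := by
  have hn : ‖Complex.exp (m * s)‖ = Real.exp (m * s.re) := by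
    rw [Complex.norm_exp]; simp
  have hre : (Complex.exp (m * s)).re = Real.exp (m * s.re) * Real.cos (m * s.im) := by
    rw [Complex.exp_re]; simp
  have him : (Complex.exp (m * s)).im = Real.exp (m * s.re) * Real.sin (m * s.im) := by
    rw [Complex.exp_im]; simp
  rw [hn] at hL
  have h1 := (Complex.abs_re_le_norm _).trans hL
  have h2 := (Complex.abs_im_le_norm _).trans hL
  rw [Complex.add_re, hre] at h1
  rw [Complex.add_im, him] at h2
  rw [Complex.add_re, Complex.add_im]
  have hm' : (1:ℝ) ≤ m := by exact_mod_cast hm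
  have hρ0 := Real.exp_pos (m * s.re)
  generalize Real.exp (m * s.re) = ρ at *
  generalize hθ : s.im = θ at *
  rw [abs_le] at h1 h2
  rw [abs_lt] at hs ⊢
  have hcos : 1/2 ≤ Real.cos (m * θ) := by
    have := Real.one_sub_sq_div_two_le_cos (x := m * θ)
    have : (m * θ)^2 ≤ 1 := by
      rw [sq_le_one_iff_abs_le_one, abs_le]
      constructor <;> nlinarith
    linarith
  have hsin : ∀ x : ℝ, 0 ≤ x → x ≤ 1 → x / 2 ≤ Real.sin x := by
    intro x h0 h1
    rcases h0.eq_or_lt with rfl | h0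
    · simp
    · have := Real.sin_gt_sub_cube h0
      nlinarith [mul_pos h0 h0, pow_le_one₀ h0.le h1 (n := 2)]
  have hρε : ρ * ε ≤ δ / 2 := by
    have : ρ * ε ≤ ρ * (m * δ / 2) := by gcongr
    nlinarith
  have hρε' : ρ * ε ≤ ρ * (m * δ / 2) := by gcongr
  have hρm : 0 < ρ * m := by positivity
  refine ⟨?_, by nlinarith⟩
  rcases le_total 0 θ with h | h
  · have ha := hsin (m * θ) (by positivity) (by nlinarith)
    have hb := Real.sin_le (x := m * θ) (by positivity)
    have ha' := mul_le_mul_of_nonneg_left ha hρ0.le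
    have hb' := mul_le_mul_of_nonneg_left hb hρ0.le
    constructor
    · nlinarith
    · nlinarith
  · have ha := hsin (m * (-θ)) (by nlinarith) (by nlinarith)
    have hb := Real.sin_le (x := m * (-θ)) (by nlinarith)
    rw [mul_neg, Real.sin_neg] at ha hb
    have ha' := mul_le_mul_of_nonneg_left ha hρ0.le
    have hb' := mul_le_mul_of_nonneg_left hb hρ0.le
    constructor
    · nlinarith
    · nlinarith

lemma log_asymp (m : ℕ) (hm : 1 ≤ m) (k : ℂ → ℂ) (hk : Tendsto k (𝓝 0) (𝓝 1)) :
    (fun ζ : ℂ => Complex.log (1 - ζ ^ m * k ζ) + ζ ^ m) =o[𝓝 0] (fun ζ : ℂ => ζ ^ m) := by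
  have hpow : Tendsto (fun ζ : ℂ => ζ ^ m) (𝓝 0) (𝓝 0) := by
    have := (continuous_pow (M := ℂ) m).tendsto 0
    rwa [zero_pow (by omega)] at this
  have hx : Tendsto (fun ζ : ℂ => 1 - ζ ^ m * k ζ) (𝓝 0) (𝓝 1) := by
    simpa using (tendsto_const_nhds (x := (1:ℂ))).sub (hpow.mul hk)
  have hd := (Complex.hasDerivAt_log (z := 1) (by simp)).isLittleO.comp_tendsto hx
  have h1 : (fun ζ : ℂ => ζ ^ m * k ζ) =O[𝓝 0] (fun ζ : ℂ => ζ ^ m) := by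
    simpa using (Asymptotics.isBigO_refl (fun ζ : ℂ => ζ ^ m) (𝓝 0)).mul (hk.isBigO_one ℂ)
  have h2 : (fun ζ : ℂ => ζ ^ m * (1 - k ζ)) =o[𝓝 0] (fun ζ : ℂ => ζ ^ m) := by
    have : Tendsto (fun ζ => 1 - k ζ) (𝓝 0) (𝓝 0) := by
      simpa using (tendsto_const_nhds (x := (1:ℂ))).sub hk
    simpa using (Asymptotics.isBigO_refl (fun ζ : ℂ => ζ ^ m) (𝓝 0)).mul_isLittleO
      ((Asymptotics.isLittleO_one_iff ℂ).2 this)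
  have h3 : (fun ζ : ℂ => Complex.log (1 - ζ ^ m * k ζ) + ζ ^ m * k ζ) =o[𝓝 0]
      (fun ζ : ℂ => ζ ^ m) := by
    refine Asymptotics.IsLittleO.trans_isBigO ?_ h1
    refine (hd.congr (g₂ := fun ζ => -(ζ ^ m * k ζ)) ?_ ?_).trans_isBigO
      (Asymptotics.isBigO_refl _ _).neg_left
    · intro ζ; simp [Function.comp]
    · intro ζ; simp [Function.comp]
  refine (h3.add h2).congr_left ?_
  intro ζ; ring

lemma iter_poly (ω : ℂ) (j : ℕ) : ∃ Q : Polynomial ℂ, (∀ z, (Pq ω)^[j] z = z * Q.eval z) ∧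
    Q.eval 0 = ω ^ j := by
  induction j with
  | zero => exact ⟨1, by simp, by simp⟩
  | succ j ih =>
    obtain ⟨Q, h1, h2⟩ := ih
    refine ⟨Q * (Polynomial.C ω + Polynomial.X * Q), ?_, ?_⟩
    · intro z
      rw [Function.iterate_succ_apply', h1]
      simp [Pq]; ring
    · simp [h2, pow_succ]

lemma iter_q (ω : ℂ) (q : ℕ) (hq : 1 ≤ q) (h0 : ω ≠ 0) (h1 : ω ^ q = 1) :
    ∃ (m : ℕ) (R : Polynomial ℂ), 1 ≤ m ∧ R.eval 0 ≠ 0 ∧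
      ∀ z, (Pq ω)^[q] z = z * (1 + z ^ m * R.eval z) := by
  obtain ⟨Q, hQ, hQ0⟩ := iter_poly ω q
  have hne : Q - 1 ≠ 0 := by
    intro h
    have hQ1 : Q = 1 := sub_eq_zero.1 h
    have hid : ∀ z, (Pq ω)^[q] z = z := by intro z; rw [hQ, hQ1]; simp
    obtain ⟨n, rfl⟩ : ∃ n, q = n + 1 := ⟨q - 1, by omega⟩
    have ha := hid (-ω)
    have hb := hid 0
    rw [Function.iterate_succ_apply] at ha hb
    have : Pq ω (-ω) = Pq ω 0 := by simp [Pq]; ring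
    rw [this, hb] at ha
    exact h0 (by simpa using ha.symm)
  obtain ⟨R, hR, hnd⟩ := Polynomial.exists_eq_pow_rootMultiplicity_mul_and_not_dvd (Q - 1) hne 0
  rw [Polynomial.C_0, sub_zero] at hR hnd
  generalize Polynomial.rootMultiplicity 0 (Q - 1) = m at *
  have hR0 : R.eval 0 ≠ 0 := by
    intro h
    apply hnd
    rw [Polynomial.X_dvd_iff, Polynomial.coeff_zero_eq_eval_zero, h]
  have hev : ∀ z, Q.eval z - 1 = z ^ m * R.eval z := by
    intro z
    have := congrArg (Polynomial.eval z) hR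
    simpa using this
  refine ⟨m, R, ?_, hR0, ?_⟩
  · rcases Nat.eq_zero_or_pos m with rfl | h
    · have := hev 0
      rw [hQ0, h1] at this
      simp at this; exact absurd this.symm (by simpa using hR0)
    · exact h
  · intro z; rw [hQ, ← hev]; ring

lemma Pq_open (ω : ℂ) : IsOpenMap (Pq ω) := by
  have han : AnalyticOnNhd ℂ (Pq ω) univ := by
    apply DifferentiableOn.analyticOnNhd _ isOpen_univ
    unfold Pq; fun_prop
  rcases han.is_constant_or_isOpen isPreconnected_univ with ⟨w, hw⟩ | h
  · exfalso
    have a := hw 0 trivial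
    have b := hw 1 trivial
    have c := hw (-1) trivial
    simp only [Pq] at a b c
    have : (2:ℂ) = 0 := by linear_combination b + c - 2 * a
    norm_num at this
  · intro s hs; exact h s (subset_univ _) hs

lemma Pq_open_iter (ω : ℂ) (n : ℕ) : IsOpenMap ((Pq ω)^[n]) := by
  induction n with
  | zero => exact IsOpenMap.id
  | succ n ih => rw [Function.iterate_succ]; exact ih.comp (Pq_open ω)

/-- the analytic core: a narrow invariant petal in logarithmic coordinates -/
lemma core (ω : ℂ) (q : ℕ) (hq : 1 ≤ q) (h0 : ω ≠ 0) (h1 : ω ^ q = 1) (δ₀ : ℝ) (hδ₀ : 0 < δ₀) :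
    ∃ (v : ℂ) (m : ℕ) (δ c : ℝ), v ≠ 0 ∧ 0 < δ ∧ δ ≤ δ₀ ∧
      (∀ s : ℂ, s.re < c → |s.im| < δ → ∃ s' : ℂ, s'.re < c ∧ |s'.im| < δ ∧
        s'.re ≤ s.re - Real.exp (m * s.re) / 4 ∧
        (Pq ω)^[q] (v * Complex.exp s) = v * Complex.exp s') ∧
      (∀ s : ℂ, s.re < c → |s.im| < δ → ∀ j < q, ∃ l : ℂ, |l.im| < δ₀ ∧
        (Pq ω)^[j] (v * Complex.exp s) = ω ^ j * v * Complex.exp (s + l)) := by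
  obtain ⟨m, R, hm, hR0, hR⟩ := iter_q ω q hq h0 h1
  obtain ⟨v, hv⟩ := IsAlgClosed.exists_pow_nat_eq (-(R.eval 0)⁻¹) (n := m) (by omega)
  have hv0 : v ≠ 0 := by
    rintro rfl
    rw [zero_pow (by omega)] at hv
    exact hR0 (by simpa using hv.symm)
  have hm' : (1:ℝ) ≤ m := by exact_mod_cast hm
  obtain ⟨δ, hδ, hδδ, hmδ⟩ : ∃ δ : ℝ, 0 < δ ∧ δ ≤ δ₀ ∧ m * δ ≤ 1 := by
    refine ⟨min δ₀ (1 / m), by positivity, min_le_left _ _, ?_⟩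
    have : min δ₀ (1 / (m:ℝ)) ≤ 1 / m := min_le_right _ _
    rw [le_div_iff₀ (by positivity)] at this
    linarith
  obtain ⟨ε, hε, hε1, hε2⟩ : ∃ ε : ℝ, 0 < ε ∧ ε ≤ 1/4 ∧ ε ≤ m * δ / 2 :=
    ⟨min (1/4) (m * δ / 2), by positivity, min_le_left _ _, min_le_right _ _⟩
  let k : ℂ → ℂ := fun ζ => R.eval (v * ζ) / R.eval 0
  have hk : Tendsto k (𝓝 0) (𝓝 1) := by
    have : Continuous k := by fun_prop
    have := this.tendsto 0
    simpa [k, hR0] using this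
  have E1 := (log_asymp m hm k hk).bound hε
  have hpow : Tendsto (fun ζ : ℂ => ζ ^ m) (𝓝 0) (𝓝 0) := by
    have := (continuous_pow (M := ℂ) m).tendsto 0
    rwa [zero_pow (by omega)] at this
  have E2 : ∀ᶠ ζ in 𝓝 (0:ℂ), 1 - ζ ^ m * k ζ ≠ 0 := by
    have : Tendsto (fun ζ : ℂ => 1 - ζ ^ m * k ζ) (𝓝 0) (𝓝 1) := by
      simpa using (tendsto_const_nhds (x := (1:ℂ))).sub (hpow.mul hk)
    exact this.eventually_ne one_ne_zero
  have E3 : ∀ᶠ ζ in 𝓝 (0:ℂ), m * ‖ζ ^ m‖ ≤ 1 := by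
    have : Tendsto (fun ζ : ℂ => m * ‖ζ ^ m‖) (𝓝 0) (𝓝 0) := by
      simpa using hpow.norm.const_mul (m:ℝ)
    exact (this.eventually_lt_const one_pos).mono fun _ h => h.le
  have E4 : ∀ᶠ ζ in 𝓝 (0:ℂ), ∀ j ∈ Finset.range q, ∃ l : ℂ, |l.im| < δ₀ ∧
        (Pq ω)^[j] (v * ζ) = ω ^ j * v * ζ * Complex.exp l := by
    rw [Filter.eventually_all_finset]
    intro j _
    obtain ⟨Q, hQ, hQ0⟩ := iter_poly ω j
    have hj : ω ^ j ≠ 0 := pow_ne_zero _ h0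
    have ht : Tendsto (fun ζ => Q.eval (v * ζ) / ω ^ j) (𝓝 0) (𝓝 1) := by
      have : Continuous (fun ζ => Q.eval (v * ζ) / ω ^ j) := by fun_prop
      have := this.tendsto 0
      simpa [hQ0, hj] using this
    have hl : Tendsto (fun ζ => |(Complex.log (Q.eval (v * ζ) / ω ^ j)).im|) (𝓝 0) (𝓝 0) := by
      have h := (continuousAt_clog (x := 1) (by simp)).tendsto.comp ht
      have := ((Complex.continuous_im.tendsto _).comp h).abs
      simpa [Function.comp_def] using this
    filter_upwards [ht.eventually_ne one_ne_zero, hl.eventually_lt_const hδ₀] with ζ ha hb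
    refine ⟨_, hb, ?_⟩
    rw [Complex.exp_log ha, hQ]
    field_simp
  obtain ⟨r, hr, H⟩ := Metric.eventually_nhds_iff.1 (E1.and (E2.and (E3.and E4)))
  have hc : ∀ s : ℂ, s.re < Real.log r → dist (Complex.exp s) 0 < r := by
    intro s hs
    rw [dist_zero_right, Complex.norm_exp]
    exact (Real.lt_log_iff_exp_lt hr).1 hs
  refine ⟨v, m, δ, Real.log r, hv0, hδ, hδδ, ?_, ?_⟩
  · intro s hs hsi
    obtain ⟨e1, e2, e3, -⟩ := H (hc s hs)
    rw [← Complex.exp_nat_mul] at e1 e3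
    have hn : ‖Complex.exp (m * s)‖ = Real.exp (m * s.re) := by
      rw [Complex.norm_exp]; simp
    rw [hn] at e3
    obtain ⟨a, b⟩ := petal_step m hm δ ε hδ hmδ hε1 hε2 s _ hsi e3 e1
    refine ⟨_, ?_, a, b, ?_⟩
    · have := Real.exp_pos (m * s.re)
      linarith
    · rw [Complex.exp_add, Complex.exp_nat_mul, Complex.exp_log e2, hR, mul_pow, hv]
      simp only [k]
      field_simp
      ring
  · intro s hs hsi j hj
    obtain ⟨-, -, -, e4⟩ := H (hc s hs)
    obtain ⟨l, hl, hl'⟩ := e4 j (Finset.mem_range.2 hj)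
    exact ⟨l, hl, by rw [hl', Complex.exp_add]; ring⟩

/-- product rule bookkeeping in `ZMod q` -/
lemma zval (q : ℕ) (hq : 2 ≤ q) (x : ZMod q) :
    (x + 1).val = x.val + 1 ∨ ((x + 1).val = 0 ∧ x.val + 1 = q) := by
  have : Fact (1 < q) := ⟨by omega⟩
  have : NeZero q := ⟨by omega⟩
  have hx := ZMod.val_lt x
  rw [ZMod.val_add, ZMod.val_one]
  rcases Nat.lt_or_ge (x.val + 1) q with h | h
  · left; exact Nat.mod_eq_of_lt h
  · right
    have : x.val + 1 = q := by omega
    rw [this]; simp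

lemma re_atBot (x : ℕ → ℝ) (m : ℕ) (h : ∀ n, x (n + 1) ≤ x n - Real.exp (m * x n) / 4) :
    Tendsto x atTop atBot := by
  have hanti : Antitone x := antitone_nat_of_succ_le fun n => by
    have := h n
    have := Real.exp_pos (m * x n)
    linarith
  rcases tendsto_atTop_of_antitone hanti with h' | ⟨l, hl⟩
  · exact h'
  · exfalso
    have h1 := hl.comp (tendsto_add_atTop_nat 1)
    have h2 : Tendsto (fun n => x n - Real.exp (m * x n) / 4) atTop
        (𝓝 (l - Real.exp (m * l) / 4)) := by
      have hc : Continuous fun y : ℝ => y - Real.exp (m * y) / 4 := by fun_prop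
      exact (hc.tendsto l).comp hl
    have := le_of_tendsto_of_tendsto' h1 h2 h
    have := Real.exp_pos (m * l)
    linarith

lemma root_close (ω : ℂ) (q : ℕ) (hq : 1 ≤ q) (h1 : ω ^ q = 1) (i j : ℕ) (t : ℂ)
    (ht : |t.im| * q < 2 * Real.pi) (h : ω ^ i = ω ^ j * Complex.exp t) : ω ^ i = ω ^ j := by
  have hpw : ∀ n : ℕ, (ω ^ n) ^ q = 1 := by
    intro n; rw [← pow_mul, mul_comm, pow_mul, h1, one_pow]
  have hE : Complex.exp (q * t) = 1 := by
    have := congrArg (· ^ q) h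
    simp only [mul_pow, hpw, one_mul] at this
    rw [Complex.exp_nat_mul, ← this]
  obtain ⟨n, hn⟩ := Complex.exp_eq_one_iff.1 hE
  have hq' : (0:ℝ) < q := by exact_mod_cast hq
  have hre := congrArg Complex.re hn
  have him := congrArg Complex.im hn
  simp at hre him
  have hn0 : n = 0 := by
    have h3 : |(q:ℝ) * t.im| = |(n:ℝ)| * (2 * Real.pi) := by
      rw [him, abs_mul, abs_of_pos Real.two_pi_pos]
    rw [abs_mul, abs_of_pos hq'] at h3
    have h4 : |(n:ℝ)| < 1 := by
      by_contra hcon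
      push Not at hcon
      have := Real.two_pi_pos
      nlinarith
    exact Int.abs_lt_one_iff.1 (by exact_mod_cast h4)
  have ht0 : t = 0 := by
    rw [hn0] at hn
    have : (q:ℂ) ≠ 0 := by exact_mod_cast hq'.ne'
    simpa [this] using hn
  rw [h, ht0]; simp

/-- Leau–Fatou attracting petals exist for `P_ω`: there are `q`
pairwise disjoint open connected subsets `U j ⊆ Λ_ω`, each with `0` on its
frontier, with `P_ω (U j) ⊆ U (j + p)` (so `P_ω^[q] (U j) ⊆ U j`), and every
orbit starting in a petal converges to `0`. -/
theorem attracting_petals_exist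
    (p q : ℕ) (hq : 2 ≤ q) (hp0 : 0 < p) (hpq : p < q) (hcop : Nat.Coprime p q)
    (ω : ℂ) (hω : ω = Complex.exp (2 * Real.pi * Complex.I * (p : ℂ) / (q : ℂ))) :
    ∃ U : ZMod q → Set ℂ,
      Pairwise (fun j k => Disjoint (U j) (U k)) ∧
      (∀ j, U j ⊆ basin ω) ∧
      (∀ j, IsOpen (U j)) ∧
      (∀ j, IsConnected (U j)) ∧
      (∀ j, (0 : ℂ) ∈ frontier (U j)) ∧
      (∀ j, Pq ω '' U j ⊆ U (j + (p : ZMod q))) ∧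
      (∀ j, (Pq ω)^[q] '' U j ⊆ U j) ∧
      (∀ j, ∀ z ∈ U j, Tendsto (fun n => (Pq ω)^[n] z) atTop (𝓝 0)) := by
  have hq0 : (q:ℂ) ≠ 0 := by exact_mod_cast (by omega : q ≠ 0)
  have hprim : IsPrimitiveRoot ω q := by
    have := Complex.isPrimitiveRoot_exp_of_coprime p q (by omega) hcop
    rw [hω]; convert this using 2; ring
  have h1 : ω ^ q = 1 := hprim.pow_eq_one
  have h0 : ω ≠ 0 := hprim.ne_zero (by omega)
  have hq' : (0:ℝ) < q := by exact_mod_cast (by omega : 0 < q)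
  obtain ⟨v, m, δ, c, hv, hδ, hδ1, hstep, hlog⟩ := core ω q (by omega) h0 h1 (1 / q) (by positivity)
  set S : Set ℂ := {s | s.re < c ∧ |s.im| < δ} with hS
  set E : ℂ → ℂ := fun s => v * Complex.exp s with hE
  have hE0 : ∀ s, E s ≠ 0 := fun s => mul_ne_zero hv (Complex.exp_ne_zero s)
  have hSo : IsOpen S :=
    (isOpen_lt Complex.continuous_re continuous_const).inter
      (isOpen_lt Complex.continuous_im.abs continuous_const)
  have hSc : IsConnected S := by
    refine ⟨⟨((c - 1 : ℝ) : ℂ), by simp [hS, hδ]⟩, ?_⟩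
    apply Convex.isPreconnected
    have : S = {s : ℂ | s.re < c} ∩ ({s : ℂ | s.im < δ} ∩ {s : ℂ | -δ < s.im}) := by
      ext s; simp only [hS, abs_lt, mem_ofPred_eq, mem_inter_iff]; tauto
    rw [this]
    exact (convex_halfSpace_re_lt c).inter
      ((convex_halfSpace_im_lt δ).inter (convex_halfSpace_im_gt (-δ)))
  have hcont : ∀ n, Continuous ((Pq ω)^[n]) := fun n =>
    Continuous.iterate (by unfold Pq; fun_prop) n
  have hfix : ∀ n, (Pq ω)^[n] 0 = 0 := fun n =>
    Function.iterate_fixed (by simp [Pq]) n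
  have hEo : IsOpen (E '' S) := by
    have h : E '' S = (fun z => v * z) '' (Complex.exp '' S) := by rw [image_image]
    rw [h]
    exact (Homeomorph.mulLeft₀ v hv).isOpenMap _ (Complex.isOpenMap_exp _ hSo)
  -- the sequence of logarithmic coordinates
  choose! F hF1 hF2 hF3 hF4 using hstep
  have hFS : ∀ s ∈ S, ∀ n, F^[n] s ∈ S ∧ (Pq ω)^[n * q] (E s) = E (F^[n] s) := by
    intro s hs n
    induction n with
    | zero => exact ⟨hs, by simp⟩
    | succ n ih =>
      rw [Function.iterate_succ_apply']
      refine ⟨⟨hF1 _ ih.1.1 ih.1.2, hF2 _ ih.1.1 ih.1.2⟩, ?_⟩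
      rw [Nat.succ_mul, add_comm, Function.iterate_add_apply, ih.2]
      exact hF4 _ ih.1.1 ih.1.2
  have hconv : ∀ s ∈ S, Tendsto (fun n => (Pq ω)^[n] (E s)) atTop (𝓝 0) := by
    intro s hs
    have hre : Tendsto (fun n => (F^[n] s).re) atTop atBot := by
      apply re_atBot _ m
      intro n
      rw [Function.iterate_succ_apply']
      have := (hFS s hs n).1
      exact hF3 _ this.1 this.2
    have hsub : Tendsto (fun n => (Pq ω)^[n * q] (E s)) atTop (𝓝 0) := by
      have : Tendsto (fun n => E (F^[n] s)) atTop (𝓝 0) := by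
        have := (Complex.tendsto_exp_comap_re_atBot.comp
          (tendsto_comap_iff.2 hre)).const_mul v
        simpa [hE, Function.comp_def] using this
      exact this.congr fun n => ((hFS s hs n).2).symm
    have hmod : ∀ j ∈ Finset.range q, Tendsto (fun n => (Pq ω)^[j] ((Pq ω)^[n * q] (E s)))
        atTop (𝓝 0) := by
      intro j _
      have := ((hcont j).tendsto 0).comp hsub
      rwa [hfix] at this
    rw [Metric.tendsto_nhds]
    intro ε hε
    have hall : ∀ᶠ n in atTop, ∀ j ∈ Finset.range q,
        dist ((Pq ω)^[j] ((Pq ω)^[n * q] (E s))) 0 < ε := by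
      rw [Filter.eventually_all_finset]
      intro j hj
      exact Metric.tendsto_nhds.1 (hmod j hj) ε hε
    have hdiv : Tendsto (fun n : ℕ => n / q) atTop atTop :=
      Nat.tendsto_div_const_atTop (by omega)
    filter_upwards [hdiv.eventually hall] with n hn
    have := hn (n % q) (Finset.mem_range.2 (Nat.mod_lt _ (by omega)))
    rwa [← Function.iterate_add_apply, Nat.mod_add_div'] at this
  have hnz : ∀ s ∈ S, ∀ n, (Pq ω)^[n] (E s) ≠ 0 := by
    intro s hs n hn
    have h2 := (hFS s hs n).2
    have : n * q = (n * q - n) + n := (Nat.sub_add_cancel (Nat.le_mul_of_pos_right n (by omega))).symm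
    rw [this, Function.iterate_add_apply, hn, hfix] at h2
    exact hE0 _ h2.symm
  have hVq : (Pq ω)^[q] '' (E '' S) ⊆ E '' S := by
    rintro _ ⟨_, ⟨s, hs, rfl⟩, rfl⟩
    have := hFS s hs 1
    rw [one_mul] at this
    exact ⟨_, this.1, this.2.symm⟩
  have : NeZero q := ⟨by omega⟩
  have hpu : (p : ZMod q) * (p : ZMod q)⁻¹ = 1 := ZMod.coe_mul_inv_eq_one p hcop
  have htend : ∀ i, ∀ s ∈ S, Tendsto (fun n => (Pq ω)^[n] ((Pq ω)^[i] (E s))) atTop (𝓝 0) := by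
    intro i s hs
    refine ((hconv s hs).comp (tendsto_add_atTop_nat i)).congr fun n => ?_
    simp [Function.iterate_add_apply]
  let ix : ZMod q → ℕ := fun j => (j * (p : ZMod q)⁻¹).val
  have hixlt : ∀ j, ix j < q := fun j => ZMod.val_lt _
  have hixinj : Function.Injective ix := by
    intro a b hab
    have := ZMod.val_injective q hab
    have h3 := congrArg (· * (p : ZMod q)) this
    simp only [mul_assoc, mul_comm ((p : ZMod q)⁻¹), hpu, mul_one] at h3
    exact h3
  refine ⟨fun j => (Pq ω)^[ix j] '' (E '' S), ?_, ?_, ?_, ?_, ?_, ?_, ?_, ?_⟩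
  · intro j k hjk
    rw [Set.disjoint_left]
    rintro _ ⟨_, ⟨s, hs, rfl⟩, rfl⟩ ⟨_, ⟨s', hs', rfl⟩, heq⟩
    obtain ⟨l, hl, hl2⟩ := hlog s hs.1 hs.2 (ix j) (hixlt j)
    obtain ⟨l', hl', hl2'⟩ := hlog s' hs'.1 hs'.2 (ix k) (hixlt k)
    apply hjk
    apply hixinj
    apply hprim.pow_inj (hixlt j) (hixlt k)
    refine root_close ω q (by omega) h1 _ _ ((s' + l') - (s + l)) ?_ ?_
    · have hb : |((s' + l') - (s + l)).im| ≤ 4 * (1 / q) := by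
        have a1 := hs.2
        have a2 := hs'.2
        simp only [Complex.sub_im, Complex.add_im]
        rw [abs_lt] at a1 a2 hl hl'
        rw [abs_le]
        constructor <;> linarith
      have : |((s' + l') - (s + l)).im| * q ≤ 4 := by
        calc _ ≤ 4 * (1 / (q:ℝ)) * q := by gcongr
          _ = 4 := by field_simp
      have := Real.pi_gt_three
      linarith
    · have h5 : ω ^ ix k * v * Complex.exp (s' + l') = ω ^ ix j * v * Complex.exp (s + l) := by
        rw [← hl2', ← hl2]; exact heq
      rw [Complex.exp_sub, ← mul_div_assoc, eq_div_iff (Complex.exp_ne_zero _)]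
      apply mul_left_cancel₀ hv
      linear_combination -h5
  · rintro j _ ⟨_, ⟨s, hs, rfl⟩, rfl⟩
    refine ⟨htend _ s hs, ?_⟩
    rintro ⟨n, hn⟩
    rw [← Function.iterate_add_apply] at hn
    exact hnz s hs _ hn
  · intro j
    exact Pq_open_iter ω _ _ hEo
  · intro j
    have hEc : Continuous E := by simp only [hE]; fun_prop
    exact (hSc.image E hEc.continuousOn).image _ (hcont _).continuousOn
  · intro j
    have hcl : (0:ℂ) ∈ closure (E '' S) := by
      have hs : ((c - 1 : ℝ) : ℂ) ∈ S := by simp [hS, hδ]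
      have h2 := hconv _ hs
      have h3 := h2.comp (tendsto_id.atTop_mul_const' (show 0 < q by omega))
      refine mem_closure_of_tendsto h3 (Eventually.of_forall fun n => ?_)
      have := hFS _ hs n
      exact ⟨_, this.1, this.2.symm⟩
    refine ⟨?_, fun h => ?_⟩
    · have := image_closure_subset_closure_image (hcont (ix j)) (mem_image_of_mem _ hcl)
      rwa [hfix] at this
    · obtain ⟨_, ⟨s, hs, rfl⟩, h⟩ := interior_subset h
      exact hnz s hs _ h
  · intro j
    have hadd : ix (j + p) = (j * (p : ZMod q)⁻¹ + 1).val := by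
      simp only [ix, add_mul, hpu]
    rintro _ ⟨_, ⟨x, hx, rfl⟩, rfl⟩
    rw [← Function.iterate_succ_apply' (Pq ω)]
    show _ ∈ (Pq ω)^[ix (j + p)] '' (E '' S)
    rw [hadd]
    rcases zval q hq (j * (p : ZMod q)⁻¹) with h | ⟨h, h'⟩
    · rw [h]; exact ⟨x, hx, rfl⟩
    · rw [h]
      have h6 : (ix j).succ = q := h'
      rw [h6]
      exact ⟨_, hVq ⟨x, hx, rfl⟩, rfl⟩
  · rintro j _ ⟨_, ⟨x, hx, rfl⟩, rfl⟩
    rw [← Function.iterate_add_apply, add_comm, Function.iterate_add_apply]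
    exact ⟨_, hVq ⟨x, hx, rfl⟩, rfl⟩
  · rintro j _ ⟨_, ⟨s, hs, rfl⟩, rfl⟩
    exact htend _ s hs
end
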